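/- For every natural number k, let 𝒢_k be the class of graphs that are either (k, k, k, k)-almost-embeddable or of (k, k)-almost bounded degree. There are constants c > 0 and d ∈ (0,1), depending only on k, such that every graph G ∈ TR(𝒢_k) that has a Hamiltonian path and order n has an induced path of order at least c·(log₂ n)^d. -/

import Mathlib

open SimpleGraph Real

/-- `G` has a (not necessarily induced) path on `n` vertices. -/
def HasPathOfOrder {V : Type*} (G : SimpleGraph V) (n : ℕ) : Prop :=
  ∃ (u v : V) (p : G.Walk u v), p.IsPath ∧ p.length + 1 = n

/-- `G` has a Hamiltonian path. -/
def HasHamPath {V : Type*} (G : SimpleGraph V) : Prop :=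
  ∃ (u v : V) (p : G.Walk u v), p.IsPath ∧ ∀ w, w ∈ p.support

/-- `G` has an induced path on at least `r` vertices (an induced subgraph isomorphic to a
path graph on `m ≥ r` vertices). -/
def HasInducedPathGE {V : Type*} (G : SimpleGraph V) (r : ℝ) : Prop :=
  ∃ m : ℕ, r ≤ (m : ℝ) ∧ Nonempty (pathGraph m ↪g G)

/-- A tree (or path) representation of `G` over the graph `T`: every vertex `v` of `G` has a
nonempty connected model `model v ⊆ V(T)`, and models of adjacent vertices intersect. -/
structure TreeRep {V N : Type*} (G : SimpleGraph V) (T : SimpleGraph N) where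
  model : V → Set N
  model_connected : ∀ v, (T.induce (model v)).Connected
  adj_meet : ∀ ⦃u v⦄, G.Adj u v → (model u ∩ model v).Nonempty

namespace TreeRep

variable {V N : Type*} {G : SimpleGraph V} {T : SimpleGraph N}

/-- The bag of the representation at a node `t`. -/
def bag (R : TreeRep G T) (t : N) : Set V := {v | t ∈ R.model v}

/-- The representation has width less than `k`, i.e. all bags have at most `k` vertices. -/
def WidthLT (R : TreeRep G T) (k : ℕ) : Prop := ∀ t, (R.bag t).ncard ≤ k

/-- The representation has width at most `k`, i.e. all bags have at most `k + 1` vertices. -/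
def WidthLE (R : TreeRep G T) (k : ℕ) : Prop := ∀ t, (R.bag t).ncard ≤ k + 1

/-- The weight of a path `p` of `T`: the number of vertices of `G` whose model meets `p`. -/
noncomputable def pathWeight (R : TreeRep G T) {x y : N} (p : T.Walk x y) : ℕ :=
  {v : V | ∃ t ∈ p.support, t ∈ R.model v}.ncard

/-- A representation is varied if no bag is contained in the bag at a neighboring node. -/
def Varied (R : TreeRep G T) : Prop := ∀ ⦃t t'⦄, T.Adj t t' → ¬ R.bag t ⊆ R.bag t'

/-- The representation has adhesion less than `a`: the adhesion set of every edge of `T`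
has fewer than `a` vertices. -/
def AdhesionLT (R : TreeRep G T) (a : ℕ) : Prop :=
  ∀ ⦃t t'⦄, T.Adj t t' → (R.bag t ∩ R.bag t').ncard < a

/-- The torso of the representation at a node `t`: the subgraph induced on the bag at `t`
together with all edges inside adhesion sets of edges of `T` incident to `t`. -/
def torso (R : TreeRep G T) (t : N) : SimpleGraph (R.bag t) :=
  SimpleGraph.fromRel (fun u v =>
    G.Adj u v ∨ ∃ t', T.Adj t t' ∧ (u : V) ∈ R.bag t' ∧ (v : V) ∈ R.bag t')

end TreeRep

/-- `G` has pathwidth less than `k`: it has a representation over a path all of whose bags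
have at most `k` vertices. -/
def PathwidthLT {V : Type*} (G : SimpleGraph V) (k : ℕ) : Prop :=
  ∃ (m : ℕ) (R : TreeRep G (pathGraph (m + 1))), R.WidthLT k

/-- `G` has treewidth less than `k`: it has a representation over a tree all of whose bags
have at most `k` vertices. -/
def TreewidthLT {V : Type*} (G : SimpleGraph V) (k : ℕ) : Prop :=
  ∃ (N : Type) (_ : Fintype N) (T : SimpleGraph N), T.IsTree ∧
    ∃ R : TreeRep G T, R.WidthLT k

/-- `G` has treewidth at most `k`. -/
def TreewidthLE {V : Type*} (G : SimpleGraph V) (k : ℕ) : Prop :=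
  ∃ (N : Type) (_ : Fintype N) (T : SimpleGraph N), T.IsTree ∧
    ∃ R : TreeRep G T, R.WidthLE k

/-- A leaf of a graph: a vertex with at most one neighbor. -/
def IsLeafNode {N : Type*} (T : SimpleGraph N) (l : N) : Prop :=
  (T.neighborSet l).Subsingleton

/-- `H` is obtained from `G` by a sequence of edge contractions: there is a surjection
from `V(G)` onto `V(H)` with connected fibers inducing the adjacency of `H`. -/
def IsContraction {W V : Type*} (H : SimpleGraph W) (G : SimpleGraph V) : Prop :=
  ∃ f : V → W, Function.Surjective f ∧
    (∀ w : W, (G.induce (f ⁻¹' {w})).Connected) ∧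
    (∀ x y : W, H.Adj x y ↔ x ≠ y ∧ ∃ u v : V, f u = x ∧ f v = y ∧ G.Adj u v)

/-- `G` is an interval graph: the intersection graph of a family of real intervals. -/
def IsIntervalGraph {V : Type*} (G : SimpleGraph V) : Prop :=
  ∃ l r : V → ℝ, (∀ v, l v ≤ r v) ∧
    ∀ u v : V, G.Adj u v ↔ u ≠ v ∧ max (l u) (l v) ≤ min (r u) (r v)

/-- The internal vertices of a walk: vertices of the walk distinct from its two endpoints. -/
def WalkInternal {V : Type*} {G : SimpleGraph V} {x y : V} (p : G.Walk x y) : Set V :=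
  {w | w ∈ p.support ∧ w ≠ x ∧ w ≠ y}

/-- `H` is a topological minor of `G`: there are branch vertices `φ u` for `u ∈ V(H)` and
internally disjoint paths of `G` joining them, one for each edge of `H`. -/
def IsTopMinor {W V : Type*} (H : SimpleGraph W) (G : SimpleGraph V) : Prop :=
  ∃ (φ : W ↪ V) (P : ∀ ⦃u v : W⦄, H.Adj u v → G.Walk (φ u) (φ v)),
    (∀ ⦃u v⦄ (h : H.Adj u v), (P h).IsPath) ∧
    (∀ ⦃u v⦄ (h : H.Adj u v), P h.symm = (P h).reverse) ∧
    (∀ ⦃u v⦄ (h : H.Adj u v), ∀ w ∈ WalkInternal (P h), w ∉ Set.range φ) ∧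
    (∀ ⦃u v u' v'⦄ (h : H.Adj u v) (h' : H.Adj u' v'), s(u, v) ≠ s(u', v') →
      ∀ w ∈ WalkInternal (P h), w ∉ WalkInternal (P h'))

/-- `H` is (an isomorphic copy of) a subgraph of `G`. -/
def ContainsSubgraphCopy {A B : Type*} (H : SimpleGraph A) (G : SimpleGraph B) : Prop :=
  ∃ f : A ↪ B, ∀ u v : A, H.Adj u v → G.Adj (f u) (f v)

/-- `G` is `k`-degenerate: every (induced) subgraph has a vertex of degree at most `k`. -/
def Degenerate {V : Type*} (G : SimpleGraph V) (k : ℕ) : Prop :=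
  ∀ s : Set V, s.Nonempty → ∃ v ∈ s, {w | w ∈ s ∧ G.Adj v w}.ncard ≤ k

/-- The cycle on `ZMod m` (for `m ≥ 3` this is the cycle graph on `m` vertices). -/
def ringGraph (m : ℕ) : SimpleGraph (ZMod m) :=
  SimpleGraph.fromRel (fun i j => j = i + 1)

/-- Cliquewidth expressions with labels in `Fin k`. -/
inductive CWExpr (k : ℕ) where
  | vertex (l : Fin k) : CWExpr k
  | union (e₁ e₂ : CWExpr k) : CWExpr k
  | addEdges (i j : Fin k) (hij : i ≠ j) (e : CWExpr k) : CWExpr k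
  | relabel (f : Fin k → Fin k) (e : CWExpr k) : CWExpr k

namespace CWExpr

variable {k : ℕ}

/-- The vertex set of the graph described by a cliquewidth expression. -/
def verts : CWExpr k → Type
  | vertex _ => Unit
  | union e₁ e₂ => e₁.verts ⊕ e₂.verts
  | addEdges _ _ _ e => e.verts
  | relabel _ e => e.verts

/-- The labelling of the vertices described by a cliquewidth expression. -/
def label : (e : CWExpr k) → e.verts → Fin k
  | vertex l, _ => l
  | union e₁ _, Sum.inl x => e₁.label x
  | union _ e₂, Sum.inr x => e₂.label x
  | addEdges _ _ _ e, x => e.label x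
  | relabel f e, x => f (e.label x)

/-- The adjacency relation described by a cliquewidth expression. -/
def adj : (e : CWExpr k) → e.verts → e.verts → Prop
  | vertex _, _, _ => False
  | union e₁ _, Sum.inl x, Sum.inl y => e₁.adj x y
  | union _ e₂, Sum.inr x, Sum.inr y => e₂.adj x y
  | union _ _, _, _ => False
  | addEdges i j _ e, x, y =>
      e.adj x y ∨ (e.label x = i ∧ e.label y = j) ∨ (e.label x = j ∧ e.label y = i)
  | relabel _ e, x, y => e.adj x y

/-- The graph described by a cliquewidth expression. -/
def graph (e : CWExpr k) : SimpleGraph e.verts := SimpleGraph.fromRel e.adj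

end CWExpr

/-- `G` has cliquewidth at most `k`: it is isomorphic to the graph of a cliquewidth
expression with at most `k` labels. -/
def CliquewidthLE {V : Type*} (G : SimpleGraph V) (k : ℕ) : Prop :=
  ∃ e : CWExpr k, Nonempty (G ≃g e.graph)

/-- `G` has `(k, Δ)`-almost bounded degree: removing at most `k` vertices yields a graph of
maximum degree at most `Δ`. -/
def AlmostBoundedDegree {V : Type*} (G : SimpleGraph V) (k Δ : ℕ) : Prop :=
  ∃ X : Set V, X.ncard ≤ k ∧ ∀ v ∉ X, {w | w ∉ X ∧ G.Adj v w}.ncard ≤ Δ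

/-- An embedding scheme for `H`: a rotation system (a permutation of the darts that is,
around each vertex, a single cycle on the darts leaving that vertex) together with a
signature on the edges. -/
structure EmbScheme {W : Type*} (H : SimpleGraph W) where
  rot : Equiv.Perm H.Dart
  rot_fst : ∀ d : H.Dart, (rot d).fst = d.fst
  rot_cyclic : ∀ d d' : H.Dart, d.fst = d'.fst → ∃ n : ℕ, (rot ^ n) d = d'
  sign : Sym2 W → Bool

namespace EmbScheme

variable {W : Type*} {H : SimpleGraph W}

/-- The face-tracing step of an embedding scheme, acting on darts with a direction. -/
def faceStep (S : EmbScheme H) : H.Dart × Bool → H.Dart × Bool :=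
  fun p =>
    let s' := xor p.2 (S.sign p.1.edge)
    ((if s' then S.rot.symm p.1.symm else S.rot p.1.symm), s')

/-- The number of orbits of a function. -/
noncomputable def orbitCount {α : Type*} (f : α → α) : ℕ :=
  Nat.card (Quotient (Relation.EqvGen.setoid (fun x y => f x = y)))

/-- The scheme describes an embedding of `H` in a surface of Euler genus at most `g`.
Isolated vertices each bound one face; every other face is traced twice by `faceStep`,
so the number of faces is `orbitCount (faceStep) / 2` plus the number of isolated
vertices, and the Euler genus of the embedding is `2c - |V| + |E| - F`. -/
def GenusLE (S : EmbScheme H) (g : ℕ) : Prop :=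
  2 * Nat.card H.ConnectedComponent + Nat.card H.edgeSet ≤
    g + Nat.card W +
      (orbitCount S.faceStep / 2 + Nat.card {v : W | ∀ w, ¬ H.Adj v w})

/-- The cycle `e 0, e 1, …, e (m-1)` is a facial cycle of the embedding scheme `S`:
its consecutive darts are consecutive in a face traversal. -/
def IsFacialCycle (S : EmbScheme H) {m : ℕ} (e : ZMod m → W)
    (hadj : ∀ x : ZMod m, H.Adj (e x) (e (x + 1))) : Prop :=
  ∃ b : ZMod m → Bool, ∀ x : ZMod m,
    S.faceStep (⟨(e x, e (x + 1)), hadj x⟩, b x) =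
      (⟨(e (x + 1), e (x + 1 + 1)), hadj (x + 1)⟩, b (x + 1))

end EmbScheme

/-- `Hs` has a `C`-vortex of width less than `k`, where `C` is the cycle of `G₀` given by
`e`: the vertices common to `Hs` and `G₀` are exactly those of `C`, and `Hs` has a cycle
representation over `C` in which the model of each vertex of `C` contains that vertex and
every bag has at most `k` vertices. -/
def IsVortex {V : Type*} {G : SimpleGraph V} (Hs G₀ : G.Subgraph) {m : ℕ}
    (e : ZMod m → G₀.verts) (k : ℕ) : Prop :=
  Hs.verts ∩ G₀.verts = Subtype.val '' Set.range e ∧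
  ∃ model : Hs.verts → Set (ZMod m),
    (∀ v, ((ringGraph m).induce (model v)).Connected) ∧
    (∀ (x : ZMod m) (v : Hs.verts), (e x : V) = (v : V) → x ∈ model v) ∧
    (∀ ⦃u v⦄, Hs.coe.Adj u v → (model u ∩ model v).Nonempty) ∧
    (∀ t : ZMod m, {v : Hs.verts | t ∈ model v}.ncard ≤ k)

/-- `G` is `(g, p, a, k)`-almost-embeddable. -/
def AlmostEmbeddable {V : Type*} (G : SimpleGraph V) (g p a k : ℕ) : Prop :=
  ∃ A : Set V, A.ncard ≤ a ∧
  ∃ s : ℕ, s ≤ p ∧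
  ∃ (G₀ : G.Subgraph) (Gv : Fin s → G.Subgraph),
    (G₀ ⊔ ⨆ i, Gv i) = (⊤ : G.Subgraph).deleteVerts A ∧
    (∀ i j, i ≠ j → Disjoint (Gv i).verts (Gv j).verts) ∧
    ∃ S : EmbScheme G₀.coe, S.GenusLE g ∧
    ∃ (m : Fin s → ℕ) (e : ∀ i, ZMod (m i) → G₀.verts)
      (hadj : ∀ i x, G₀.coe.Adj (e i x) (e i (x + 1))),
      (∀ i, 3 ≤ m i) ∧
      (∀ i, Function.Injective (e i)) ∧
      (∀ i, S.IsFacialCycle (e i) (hadj i)) ∧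
      (∀ i j, i ≠ j → Disjoint (Set.range (e i)) (Set.range (e j))) ∧
      (∀ i, IsVortex (Gv i) G₀ (e i) k)


set_option linter.unusedSectionVars false

namespace Topo

section
open scoped Classical

variable {W : Type} [Fintype W] {H : SimpleGraph W} (S : EmbScheme H)

/-- the involution exchanging the two darts of an edge side -/
def th (p : H.Dart × Bool) : H.Dart × Bool := (p.1.symm, xor (!p.2) (S.sign p.1.edge))

lemma th_th (p : H.Dart × Bool) : th S (th S p) = p := by
  rcases p with ⟨d, b⟩
  simp only [th, Dart.symm_symm, Dart.edge_symm]
  congr 1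
  cases b <;> cases S.sign d.edge <;> rfl

lemma th_ne (p : H.Dart × Bool) : th S p ≠ p := by
  intro h
  exact Dart.symm_ne p.1 (congrArg Prod.fst h)

lemma face_th_true (d : H.Dart) : S.faceStep (th S (d, true)) = (S.rot d, false) := by
  simp only [th, EmbScheme.faceStep, Dart.symm_symm, Dart.edge_symm]
  cases S.sign d.edge <;> rfl

lemma face_th_false (d : H.Dart) : S.faceStep (th S (d, false)) = (S.rot.symm d, true) := by
  simp only [th, EmbScheme.faceStep, Dart.symm_symm, Dart.edge_symm]
  cases S.sign d.edge <;> rfl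

lemma face_th_face (p : H.Dart × Bool) : S.faceStep (th S (S.faceStep p)) = th S p := by
  obtain ⟨q, rfl⟩ : ∃ q, th S q = p := ⟨th S p, th_th S p⟩
  rcases q with ⟨d, b⟩
  cases b
  · rw [face_th_false, face_th_true, th_th]; simp
  · rw [face_th_true, face_th_false, th_th]; simp

/-- the face relation on flags -/
def fsetoid : Setoid (H.Dart × Bool) :=
  Relation.EqvGen.setoid (fun p q => th S p = q ∨ S.faceStep p = q)

/-- faces -/
def Face : Type := Quotient (fsetoid S)

noncomputable instance : Fintype (Face S) := by
  unfold Face; infer_instance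

/-- face of a flag -/
def fc (p : H.Dart × Bool) : Face S := Quotient.mk (fsetoid S) p

lemma fc_th (p : H.Dart × Bool) : fc S (th S p) = fc S p :=
  (Quotient.sound (s := fsetoid S) (Relation.EqvGen.rel (r := fun p q => th S p = q ∨ S.faceStep p = q) _ _ (Or.inl rfl))).symm

lemma fc_face (p : H.Dart × Bool) : fc S (S.faceStep p) = fc S p :=
  (Quotient.sound (s := fsetoid S) (Relation.EqvGen.rel (r := fun p q => th S p = q ∨ S.faceStep p = q) _ _ (Or.inr rfl))).symm

lemma fc_rot (d : H.Dart) : fc S (S.rot d, false) = fc S (d, true) := by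
  rw [← face_th_true, fc_face, fc_th]

lemma fc_surj (x : Face S) : ∃ p, fc S p = x := Quotient.exists_rep x

lemma fc_inv {α : Type*} {P : H.Dart × Bool → α} (h1 : ∀ p, P (th S p) = P p)
    (h2 : ∀ p, P (S.faceStep p) = P p) {p q : H.Dart × Bool} (h : fc S p = fc S q) : P p = P q := by
  have := Quotient.exact h
  have h' : Relation.EqvGen (fun p q => th S p = q ∨ S.faceStep p = q) p q := this
  clear h this
  induction h' with
  | rel x y h => rcases h with rfl | rfl
                 · exact (h1 _).symm
                 · exact (h2 _).symm
  | refl x => rfl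
  | symm x y _ ih => exact ih.symm
  | trans x y z _ _ h1 h2 => exact h1.trans h2

lemma orbit_le : EmbScheme.orbitCount S.faceStep / 2 ≤ Fintype.card (Face S) := by
  have key : EmbScheme.orbitCount S.faceStep ≤ Fintype.card (Face S × Bool) := by
    unfold EmbScheme.orbitCount
    rw [← Nat.card_eq_fintype_card]
    set st := Relation.EqvGen.setoid (fun x y => S.faceStep x = y) with hst
    let o : H.Dart × Bool → Quotient st := fun p => Quotient.mk st p
    have of : ∀ p, o (S.faceStep p) = o p := fun p =>
      (Quotient.sound (s := st) (Relation.EqvGen.rel (r := fun x y => S.faceStep x = y) _ _ rfl)).symm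
    have oth : ∀ p, o (th S (S.faceStep p)) = o (th S p) := by
      intro p
      rw [← of, face_th_face]
    have hout : ∀ x : Face S, ∃ p, fc S p = x := fc_surj S
    choose r hr using hout
    apply Nat.card_le_card_of_surjective (f := fun z : Face S × Bool =>
      if z.2 then o (r z.1) else o (th S (r z.1)))
    intro c
    obtain ⟨p, rfl⟩ := Quotient.exists_rep c
    have hc : ∀ p q, fc S p = fc S q → ({o p, o (th S p)} : Set (Quotient st)) = {o q, o (th S q)} := by
      intro p q h
      apply fc_inv S (P := fun p => ({o p, o (th S p)} : Set (Quotient st))) _ _ h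
      · intro p; rw [th_th, Set.pair_comm]
      · intro p; rw [of, oth]
    have := hc (r (fc S p)) p (hr _)
    have hm : o p ∈ ({o (r (fc S p)), o (th S (r (fc S p)))} : Set (Quotient st)) := by
      rw [this]; simp
    rcases hm with h | h
    · exact ⟨(fc S p, true), by simpa using h.symm⟩
    · exact ⟨(fc S p, false), by simpa using (Set.mem_singleton_iff.1 h).symm⟩
  rw [Fintype.card_prod, Fintype.card_bool] at key
  omega

/-- a dart for each edge -/
noncomputable def dartOf (e : H.edgeSet) : H.Dart :=
  Classical.choose (show ∃ d : H.Dart, d.edge = (e : Sym2 W) by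
    rcases e with ⟨e, he⟩
    induction e with
    | h u v => exact ⟨⟨(u, v), he⟩, rfl⟩)

lemma dartOf_edge (e : H.edgeSet) : (dartOf e).edge = (e : Sym2 W) :=
  Classical.choose_spec (show ∃ d : H.Dart, d.edge = (e : Sym2 W) by
    rcases e with ⟨e, he⟩
    induction e with
    | h u v => exact ⟨⟨(u, v), he⟩, rfl⟩)

/-- edge of a dart -/
def eo (d : H.Dart) : H.edgeSet := ⟨d.edge, d.edge_mem⟩

lemma eo_dartOf (e : H.edgeSet) : eo (dartOf e) = e := Subtype.ext (dartOf_edge e)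

lemma eo_symm (d : H.Dart) : eo d.symm = eo d := Subtype.ext (Dart.edge_symm d)

lemma dartOf_eo (d : H.Dart) : dartOf (eo d) = d ∨ dartOf (eo d) = d.symm := by
  have := dartOf_edge (eo d)
  exact (dart_edge_eq_iff _ _).1 this

lemma sum_darts {M : Type*} [AddCommMonoid M] (F : H.Dart → M) :
    ∑ d, F d = ∑ e : H.edgeSet, (F (dartOf e) + F (dartOf e).symm) := by
  rw [← Finset.sum_fiberwise_of_maps_to (s := Finset.univ) (t := Finset.univ) (g := eo) (by simp)]
  apply Finset.sum_congr rfl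
  intro e _
  have : (Finset.univ.filter fun d : H.Dart => eo d = e) = {dartOf e, (dartOf e).symm} := by
    ext d
    simp only [Finset.mem_filter, Finset.mem_univ, true_and, Finset.mem_insert,
      Finset.mem_singleton]
    constructor
    · rintro rfl
      rcases dartOf_eo d with h | h
      · left; rw [h]
      · right; rw [h, Dart.symm_symm]
    · rintro (rfl | rfl)
      · exact eo_dartOf e
      · rw [eo_symm, eo_dartOf]
  rw [this, Finset.sum_pair (Dart.symm_ne _).symm]

lemma sum_flags {M : Type*} [AddCommMonoid M] (F : H.Dart × Bool → M) :
    ∑ p, F p = ∑ e : H.edgeSet, ∑ b : Bool, (F (dartOf e, b) + F (th S (dartOf e, b))) := by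
  rw [Fintype.sum_prod_type, sum_darts]
  apply Finset.sum_congr rfl
  intro e _
  rw [Finset.sum_add_distrib]
  congr 1
  simp only [th]
  cases S.sign (dartOf e).edge <;> simp [add_comm]

end
end Topo


namespace Topo

section
open scoped Classical

variable {W : Type} [Fintype W] {H : SimpleGraph W} (S : EmbScheme H)

/-- indices of one-dimensional cells -/
abbrev I1 (H : SimpleGraph W) : Type := H.edgeSet ⊕ H.Dart

/-- zero-dimensional cells -/
abbrev P0 : Type := W ⊕ Face S

/-- first end -/
noncomputable def e1 : I1 H → P0 S
  | Sum.inl e => Sum.inl (dartOf e).fst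
  | Sum.inr d => Sum.inl d.fst

/-- second end -/
noncomputable def e2 : I1 H → P0 S
  | Sum.inl e => Sum.inl (dartOf e).snd
  | Sum.inr d => Sum.inr (fc S (d, true))

/-- indicator -/
noncomputable def sg {α : Type} (a : α) : α → ZMod 2 := Pi.single a 1

lemma f2_add_self {M : Type*} [AddCommGroup M] [Module (ZMod 2) M] (x : M) : x + x = 0 := by
  have : (2 : ZMod 2) • x = 0 := by
    rw [show (2 : ZMod 2) = 0 from rfl, zero_smul]
  rwa [two_smul] at this

lemma f2_eq_of_add {M : Type*} [AddCommGroup M] [Module (ZMod 2) M] {x y : M} (h : x + y = 0) :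
    x = y := by
  have h2 := f2_add_self y
  have : x + y = y + y := by rw [h, h2]
  exact add_right_cancel this

/-- boundary of one-chains -/
noncomputable def d1 : (I1 H → ZMod 2) →ₗ[ZMod 2] (P0 S → ZMod 2) :=
  Fintype.linearCombination (ZMod 2) (fun i : I1 H => sg (e1 S i) + sg (e2 S i))

lemma d1_sg (i : I1 H) : d1 S (sg i) = sg (e1 S i) + sg (e2 S i) := by
  simp [d1, sg, Fintype.linearCombination_apply_single]

/-- boundary of two-chains -/
noncomputable def d2 : (H.Dart × Bool → ZMod 2) →ₗ[ZMod 2] (I1 H → ZMod 2) where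
  toFun y := fun i => match i with
    | Sum.inl e => y (dartOf e, false) + y (dartOf e, true)
    | Sum.inr d => y (d, true) + y (S.rot d, false)
  map_add' x y := by
    funext i; rcases i with e | d <;> simp <;> ring
  map_smul' c y := by
    funext i; rcases i with e | d <;> simp <;> ring

lemma d2_inl (y : H.Dart × Bool → ZMod 2) (e) :
    d2 S y (Sum.inl e) = y (dartOf e, false) + y (dartOf e, true) := rfl

lemma d2_inr (y : H.Dart × Bool → ZMod 2) (d) :
    d2 S y (Sum.inr d) = y (d, true) + y (S.rot d, false) := rfl

/-- two-chains -/
def X2 : Submodule (ZMod 2) (H.Dart × Bool → ZMod 2) where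
  carrier := {y | ∀ p, y (th S p) = y p}
  add_mem' := by
    intro a b ha hb p
    simp only [Pi.add_apply]
    rw [ha p, hb p]
  zero_mem' := by intro p; rfl
  smul_mem' := by
    intro c a ha p
    simp only [Pi.smul_apply]
    rw [ha p]

lemma d1_d2 (y : H.Dart × Bool → ZMod 2) (hy : y ∈ X2 S) : d1 S (d2 S y) = 0 := by
  have hy' : ∀ p, y (th S p) = y p := hy
  simp only [d1, Fintype.linearCombination_apply, Fintype.sum_sum_type, d2_inl, d2_inr, e1, e2]
  have h2 : ∑ d : H.Dart, (y (d, true) + y (S.rot d, false)) •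
      (sg (Sum.inl d.fst : P0 S) + sg (Sum.inr (fc S (d, true)) : P0 S)) =
      ∑ p : H.Dart × Bool, y p • (sg (Sum.inl p.1.fst : P0 S) + sg (Sum.inr (fc S p) : P0 S)) := by
    rw [Fintype.sum_prod_type]
    simp only [Fintype.sum_bool, add_smul, Finset.sum_add_distrib]
    congr 1
    rw [← Equiv.sum_comp S.rot (fun d : H.Dart => y (d, false) • (sg (Sum.inl d.fst : P0 S)
      + sg (Sum.inr (fc S (d, false)) : P0 S)))]
    apply Finset.sum_congr rfl
    intro d _
    rw [S.rot_fst, fc_rot]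
  rw [h2, sum_flags S, ← Finset.sum_add_distrib]
  apply Finset.sum_eq_zero
  intro e _
  simp only [hy', fc_th]
  rw [add_smul, Fintype.sum_bool]
  have hs : ∀ b, (th S (dartOf e, b)).1.fst = (dartOf e).snd := fun b => rfl
  simp only [hs]
  generalize (sg (Sum.inl (dartOf e).toProd.1) : P0 S → ZMod 2) = a
  generalize (sg (Sum.inl (dartOf e).toProd.2) : P0 S → ZMod 2) = b
  generalize (sg (Sum.inr (fc S (dartOf e, true))) : P0 S → ZMod 2) = c
  generalize (sg (Sum.inr (fc S (dartOf e, false))) : P0 S → ZMod 2) = c'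
  simp only [smul_add]
  have := f2_add_self (y (dartOf e, true) • (a + b + c) + y (dartOf e, false) • (a + b + c'))
  simp only [smul_add] at this
  abel_nf at this ⊢
  simp [show ((2 : ℤ) : ZMod 2) = 0 from rfl, two_smul, f2_add_self, two_mul]

lemma X2_dim : 2 * Fintype.card H.edgeSet ≤ Module.finrank (ZMod 2) (X2 S) := by
  let L : (H.Dart × Bool → ZMod 2) →ₗ[ZMod 2] (H.Dart × Bool → ZMod 2) :=
    LinearMap.id + LinearMap.funLeft (ZMod 2) (ZMod 2) (th S)
  have hL : ∀ y p, L y p = y p + y (th S p) := fun y p => rfl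
  have hk : LinearMap.ker L ≤ X2 S := by
    intro y hy p
    have : L y p = 0 := by rw [LinearMap.mem_ker.1 hy]; rfl
    rw [hL] at this
    exact (f2_eq_of_add this).symm
  have hr : LinearMap.range L ≤ X2 S := by
    rintro _ ⟨y, rfl⟩ p
    rw [hL, hL, th_th, add_comm]
  have h := LinearMap.finrank_range_add_finrank_ker L
  have h1 := Submodule.finrank_mono hk
  have h2 := Submodule.finrank_mono hr
  rw [Module.finrank_fintype_fun_eq_card, Fintype.card_prod, Fintype.card_bool] at h
  have h3 := H.dart_card_eq_twice_card_edges
  have h4 : H.edgeFinset.card = Fintype.card H.edgeSet := by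
    rw [← SimpleGraph.edgeFinset_card]
  omega

/-- locally constant functions -/
def K0 (H : SimpleGraph W) : Submodule (ZMod 2) (W → ZMod 2) where
  carrier := {u | ∀ a b, H.Adj a b → u a = u b}
  add_mem' := by
    intro a b ha hb p q h
    simp only [Pi.add_apply]
    rw [ha p q h, hb p q h]
  zero_mem' := by intro p q h; rfl
  smul_mem' := by
    intro c a ha p q h
    simp only [Pi.smul_apply]
    rw [ha p q h]

lemma K0_dim : Module.finrank (ZMod 2) (K0 H) ≤ Nat.card H.ConnectedComponent := by
  rw [Nat.card_eq_fintype_card, ← Module.finrank_fintype_fun_eq_card (R := ZMod 2)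
    (η := H.ConnectedComponent)]
  let L : K0 H →ₗ[ZMod 2] (H.ConnectedComponent → ZMod 2) :=
    (LinearMap.funLeft (ZMod 2) (ZMod 2) (fun c : H.ConnectedComponent => c.out)).comp (K0 H).subtype
  apply LinearMap.finrank_le_finrank_of_injective (f := L)
  rw [← LinearMap.ker_eq_bot, LinearMap.ker_eq_bot']
  rintro ⟨u, hu⟩ h
  ext v
  have h1 : u ((H.connectedComponentMk v).out) = 0 := congrFun h (H.connectedComponentMk v)
  have h2 : H.Reachable (H.connectedComponentMk v).out v := by
    have := Quot.out_eq (H.connectedComponentMk v)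
    exact SimpleGraph.ConnectedComponent.exact this
  have h3 : ∀ a b, H.Reachable a b → u a = u b := by
    rintro a b ⟨p⟩
    induction p with
    | nil => rfl
    | cons h p ih => rw [hu _ _ h, ih]
  show u v = 0
  rw [← h3 _ _ h2, h1]

lemma ker_local {y : H.Dart × Bool → ZMod 2} (hy : y ∈ X2 S) {d : H.Dart}
    (h : d2 S y (Sum.inl (eo d)) = 0) : y (d, false) = y (d, true) := by
  have hy' : ∀ p, y (th S p) = y p := hy
  rw [d2_inl] at h
  have h := f2_eq_of_add h
  rcases dartOf_eo d with h1 | h1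
  · rwa [h1] at h
  · rw [h1] at h
    rw [← hy' (d, false), ← hy' (d, true)]
    simp only [th]
    cases S.sign d.edge
    · exact h.symm
    · exact h

lemma ker_at {y : H.Dart × Bool → ZMod 2} (hy : y ∈ X2 S) {v : W}
    (h1 : ∀ d : H.Dart, d.fst = v → d2 S y (Sum.inl (eo d)) = 0)
    (h2 : ∀ d : H.Dart, d.fst = v → d2 S y (Sum.inr d) = 0) (p q : H.Dart × Bool)
    (hp : p.1.fst = v) (hq : q.1.fst = v) : y p = y q := by
  have hn : ∀ n : ℕ, ∀ d : H.Dart, d.fst = v → ((S.rot ^ n) d).fst = v ∧ y ((S.rot ^ n) d, true) = y (d, true) := by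
    intro n
    induction n with
    | zero => intro d hd; exact ⟨by simpa using hd, by simp⟩
    | succ n ih =>
      intro d hd
      have hd' : (S.rot d).fst = v := by rw [S.rot_fst, hd]
      obtain ⟨i1, i2⟩ := ih _ hd'
      rw [pow_succ, Equiv.Perm.mul_apply]
      refine ⟨i1, ?_⟩
      rw [i2, ← ker_local S hy (h1 _ hd')]
      have := h2 d hd
      rw [d2_inr] at this
      exact (f2_eq_of_add this).symm
  have hb : ∀ p : H.Dart × Bool, p.1.fst = v → y p = y (p.1, true) := by
    rintro ⟨d, b⟩ hd
    cases b
    · exact ker_local S hy (h1 _ hd)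
    · rfl
  rw [hb p hp, hb q hq]
  obtain ⟨n, hn'⟩ := S.rot_cyclic p.1 q.1 (hp.trans hq.symm)
  rw [← hn', (hn n _ hp).2]

/-- crossing an edge -/
lemma ker_cross {y : H.Dart × Bool → ZMod 2} (hy : y ∈ X2 S) (d : H.Dart) :
    ∃ b, y (d, true) = y (d.symm, b) := ⟨_, ((show ∀ p, y (th S p) = y p from hy) (d, true)).symm⟩

lemma ker_reach {y : H.Dart × Bool → ZMod 2} (hy : y ∈ X2 S) (h : d2 S y = 0)
    {u v : W} (huv : H.Reachable u v) : ∀ (p q : H.Dart × Bool)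
    (_ : p.1.fst = u) (_ : q.1.fst = v), y p = y q := by
  obtain ⟨w⟩ := huv
  have hat := fun v => ker_at S hy (v := v) (fun _ _ => by rw [h]; rfl) (fun _ _ => by rw [h]; rfl)
  induction w with
  | nil => intro p q hp hq; exact hat _ p q hp hq
  | @cons a b c hab w ih =>
    intro p q hp hq
    obtain ⟨s, hs⟩ := ker_cross S hy ⟨(a, b), hab⟩
    rw [hat a p (⟨(a, b), hab⟩, true) hp rfl, hs]
    exact ih _ _ rfl hq

lemma ker_dim : Module.finrank (ZMod 2) (X2 S ⊓ LinearMap.ker (d2 S) : Submodule _ _) +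
    Nat.card {v : W | ∀ w, ¬ H.Adj v w} ≤ Nat.card H.ConnectedComponent := by
  refine le_trans ?_ (K0_dim (H := H))
  set Iso := {v : W | ∀ w, ¬ H.Adj v w}
  have hd : ∀ v : W, v ∉ Iso → ∃ d : H.Dart, d.fst = v := by
    intro v hv
    simp only [Iso, Set.mem_ofPred_eq, not_forall, not_not] at hv
    obtain ⟨w, hw⟩ := hv
    exact ⟨⟨(v, w), hw⟩, rfl⟩
  choose dd hdd using hd
  rw [Nat.card_eq_fintype_card, ← Module.finrank_fintype_fun_eq_card (R := ZMod 2) (η := Iso),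
    ← Module.finrank_prod]
  let L0 : (X2 S ⊓ LinearMap.ker (d2 S) : Submodule _ _) × (Iso → ZMod 2) →ₗ[ZMod 2] (W → ZMod 2) :=
    { toFun := fun z v => if h : v ∈ Iso then z.2 ⟨v, h⟩ else z.1.1 (dd v h, true)
      map_add' := by
        intro x y; funext v; by_cases h : v ∈ Iso <;> simp [h]
      map_smul' := by
        intro c y; funext v; by_cases h : v ∈ Iso <;> simp [h] }
  have hL1 : ∀ z v (h : v ∈ Iso), L0 z v = z.2 ⟨v, h⟩ := by
    intro z v h; exact dif_pos h
  have hL2 : ∀ z v (h : v ∉ Iso), L0 z v = z.1.1 (dd v h, true) := by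
    intro z v h; exact dif_neg h
  have hm : ∀ z, L0 z ∈ K0 H := by
    rintro ⟨⟨y, hy1, hy2⟩, t⟩ a b hab
    have ha : a ∉ Iso := fun h => h b hab
    have hb : b ∉ Iso := fun h => h a hab.symm
    rw [hL2 _ _ ha, hL2 _ _ hb]
    exact ker_reach S hy1 hy2 hab.reachable _ _ (hdd _ ha) (hdd _ hb)
  let L := L0.codRestrict (K0 H) hm
  apply LinearMap.finrank_le_finrank_of_injective (f := L)
  rw [← LinearMap.ker_eq_bot, LinearMap.ker_eq_bot']
  rintro ⟨⟨y, hy1, hy2⟩, t⟩ h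
  have h0 : ∀ v, L0 (⟨y, hy1, hy2⟩, t) v = 0 := fun v => congrFun (congrArg Subtype.val h) v
  have e1 : t = 0 := by
    funext v
    have := h0 v
    rw [hL1 _ _ v.2] at this
    exact this
  have e2 : y = 0 := by
    funext p
    have hp : p.1.fst ∉ Iso := fun h => h _ p.1.adj
    have := h0 p.1.fst
    rw [hL2 _ _ hp] at this
    rw [Pi.zero_apply, ← this]
    exact ker_reach S hy1 hy2 (Reachable.refl p.1.fst) _ _ rfl (hdd _ hp)
  subst e1 e2
  rfl

lemma d1_rank : Fintype.card (P0 S) ≤ Module.finrank (ZMod 2) (LinearMap.range (d1 S)) +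
    Nat.card H.ConnectedComponent := by
  let U : Submodule (ZMod 2) (P0 S → ZMod 2) := Submodule.span (ZMod 2)
    (Set.range fun c : H.ConnectedComponent => sg (Sum.inl c.out : P0 S))
  have hU : Module.finrank (ZMod 2) U ≤ Nat.card H.ConnectedComponent := by
    rw [Nat.card_eq_fintype_card]
    exact finrank_range_le_card _
  have hstep : ∀ i : I1 H, sg (e1 S i) + sg (e2 S i) ∈ LinearMap.range (d1 S) :=
    fun i => ⟨sg i, d1_sg S i⟩
  have hadj : ∀ a b, H.Adj a b → sg (Sum.inl a : P0 S) + sg (Sum.inl b : P0 S) ∈ LinearMap.range (d1 S) := by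
    intro a b hab
    have := hstep (Sum.inl (eo ⟨(a, b), hab⟩))
    simp only [e1, e2] at this
    rcases dartOf_eo (⟨(a, b), hab⟩ : H.Dart) with h | h
    · rw [h] at this; exact this
    · rw [h] at this; rw [add_comm]; exact this
  have hreach : ∀ a b, H.Reachable a b → sg (Sum.inl b : P0 S) ∈ LinearMap.range (d1 S) ⊔ U →
      sg (Sum.inl a : P0 S) ∈ LinearMap.range (d1 S) ⊔ U := by
    rintro a b ⟨p⟩ h
    induction p with
    | nil => exact h
    | @cons a c b hac p ih =>
      have h1 := ih h
      have h2 := Submodule.add_mem _ (Submodule.mem_sup_left (T := U) (hadj _ _ hac)) h1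
      rwa [add_assoc, f2_add_self, add_zero] at h2
  have hW : ∀ v, sg (Sum.inl v : P0 S) ∈ LinearMap.range (d1 S) ⊔ U := by
    intro v
    refine hreach v (H.connectedComponentMk v).out ?_ ?_
    · exact (SimpleGraph.ConnectedComponent.exact (Quot.out_eq (H.connectedComponentMk v))).symm
    · exact Submodule.mem_sup_right (Submodule.subset_span ⟨_, rfl⟩)
  have hF : ∀ d : H.Dart, sg (Sum.inr (fc S (d, true)) : P0 S) ∈ LinearMap.range (d1 S) ⊔ U := by
    intro d
    have h2 := Submodule.add_mem _ (Submodule.mem_sup_left (T := U) (hstep (Sum.inr d))) (hW d.fst)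
    simp only [e1, e2] at h2
    rw [add_comm, ← add_assoc, f2_add_self, zero_add] at h2
    exact h2
  have htop : LinearMap.range (d1 S) ⊔ U = ⊤ := by
    rw [eq_top_iff, ← (Pi.basisFun (ZMod 2) (P0 S)).span_eq, Submodule.span_le]
    rintro _ ⟨p, rfl⟩
    rw [Pi.basisFun_apply]
    suffices h : sg p ∈ LinearMap.range (d1 S) ⊔ U by
      have he : (Pi.single p 1 : P0 S → ZMod 2) = sg p := by
        funext x
        simp only [sg, Pi.single_apply]
        by_cases hx : x = p <;> simp [hx]
      rw [he]
      exact h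
    rcases p with v | f
    · exact hW v
    · obtain ⟨⟨d, b⟩, rfl⟩ := fc_surj S f
      cases b
      · have := hF (S.rot.symm d)
        rw [← fc_rot, Equiv.apply_symm_apply] at this
        exact this
      · exact hF d
  have h1 := Submodule.finrank_add_le_finrank_add_finrank (LinearMap.range (d1 S)) U
  rw [htop, finrank_top, Module.finrank_fintype_fun_eq_card] at h1
  omega

/-- the Euler genus bounds the homology -/
lemma genus_dim {g : ℕ} (hg : S.GenusLE g) :
    Module.finrank (ZMod 2) (LinearMap.ker (d1 S)) ≤
      Module.finrank (ZMod 2) ((X2 S).map (d2 S)) + g := by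
  have h1 := LinearMap.finrank_range_add_finrank_ker (d1 S)
  rw [Module.finrank_fintype_fun_eq_card, Fintype.card_sum] at h1
  have h2 := d1_rank S
  rw [Fintype.card_sum] at h2
  have h3 := orbit_le S
  have h4 := X2_dim S
  have h5 := ker_dim S
  have h6 := LinearMap.finrank_range_add_finrank_ker ((d2 S).domRestrict (X2 S))
  rw [LinearMap.range_domRestrict] at h6
  have h7 : Module.finrank (ZMod 2) (LinearMap.ker ((d2 S).domRestrict (X2 S))) ≤
      Module.finrank (ZMod 2) (X2 S ⊓ LinearMap.ker (d2 S) : Submodule _ _) := by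
    let L : LinearMap.ker ((d2 S).domRestrict (X2 S)) →ₗ[ZMod 2]
        (X2 S ⊓ LinearMap.ker (d2 S) : Submodule _ _) :=
      LinearMap.codRestrict _ ((X2 S).subtype.comp (Submodule.subtype _))
        (fun z => ⟨z.1.2, z.2⟩)
    apply LinearMap.finrank_le_finrank_of_injective (f := L)
    intro a b hab
    have := congrArg Subtype.val hab
    exact Subtype.ext (Subtype.ext this)
  have h8 := H.dart_card_eq_twice_card_edges
  have h9 : H.edgeFinset.card = Fintype.card H.edgeSet := by
    rw [← SimpleGraph.edgeFinset_card]
  unfold EmbScheme.GenusLE at hg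
  rw [Nat.card_eq_fintype_card (α := H.edgeSet), Nat.card_eq_fintype_card (α := W)] at hg
  omega

lemma choose_basis {g : ℕ} (hg : S.GenusLE g) {ι : Type} [Fintype ι] (C : ι → I1 H → ZMod 2)
    (hC : ∀ i, d1 S (C i) = 0) :
    ∃ X : Finset ι, X.card ≤ g ∧ (∀ i, ∃ a : ι → ZMod 2,
      (C i + ∑ x ∈ X, a x • C x) ∈ (X2 S).map (d2 S)) ∧
      (∀ a : ι → ZMod 2, (∑ x ∈ X, a x • C x) ∈ (X2 S).map (d2 S) → ∑ x ∈ X, a x • C x = 0) := by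
  set B := (X2 S).map (d2 S) with hB
  let q := B.mkQ
  obtain ⟨κ, a, ha, hsp, hli⟩ := exists_linearIndependent' (ZMod 2) (fun i => q (C i))
  have hBZ : B ≤ LinearMap.ker (d1 S) := by
    rintro _ ⟨y, hy, rfl⟩
    exact d1_d2 S y hy
  have : Finite κ := Finite.of_injective a ha
  have : Fintype κ := Fintype.ofFinite κ
  have hcard : Fintype.card κ ≤ g := by
    have h1 : Module.finrank (ZMod 2) ((LinearMap.ker (d1 S)).map q) ≤ g := by
      have h6 := LinearMap.finrank_range_add_finrank_ker (q.domRestrict (LinearMap.ker (d1 S)))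
      rw [LinearMap.range_domRestrict] at h6
      have h7 := genus_dim S hg
      have h8 : Module.finrank (ZMod 2) B ≤
          Module.finrank (ZMod 2) (LinearMap.ker (q.domRestrict (LinearMap.ker (d1 S)))) := by
        let L : B →ₗ[ZMod 2] LinearMap.ker (q.domRestrict (LinearMap.ker (d1 S))) :=
          LinearMap.codRestrict _ (Submodule.inclusion hBZ) (by
            intro c
            rw [LinearMap.mem_ker]
            show q (c : I1 H → ZMod 2) = 0
            exact (Submodule.Quotient.mk_eq_zero B).2 c.2)
        apply LinearMap.finrank_le_finrank_of_injective (f := L)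
        intro a b hab
        have := congrArg (fun z => (z.1.1 : I1 H → ZMod 2)) hab
        exact Subtype.ext this
      rw [← hB] at h7
      omega
    have h2 := hli.fintype_card_le_finrank
    have h2 : Fintype.card κ = Module.finrank (ZMod 2) (Submodule.span (ZMod 2)
        (Set.range ((fun i => q (C i)) ∘ a))) := (finrank_span_eq_card hli).symm
    rw [h2]
    refine le_trans (Submodule.finrank_mono ?_) h1
    rw [Submodule.span_le]
    rintro _ ⟨k, rfl⟩
    exact ⟨C (a k), hC _, rfl⟩
  have hsum : ∀ b : ι → ZMod 2, ∑ x ∈ Finset.univ.map ⟨a, ha⟩, b x • C x = ∑ k, b (a k) • C (a k) := by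
    intro b
    rw [Finset.sum_map]; rfl
  refine ⟨Finset.univ.map ⟨a, ha⟩, by simpa using hcard, ?_, ?_⟩
  · intro i
    have : q (C i) ∈ Submodule.span (ZMod 2) (Set.range ((fun i => q (C i)) ∘ a)) := by
      rw [hsp]; exact Submodule.subset_span ⟨i, rfl⟩
    rw [Submodule.mem_span_range_iff_exists_fun] at this
    obtain ⟨c, hc⟩ := this
    refine ⟨Function.extend a c 0, ?_⟩
    rw [hsum]
    simp only [ha.extend_apply]
    rw [← Submodule.Quotient.mk_eq_zero]
    show q _ = 0
    rw [map_add, map_sum, ← hc]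
    simp only [map_smul, Function.comp_apply]
    exact f2_add_self _
  · intro b hb
    rw [hsum] at hb ⊢
    have h0 : ∑ k, b (a k) • ((fun i => q (C i)) ∘ a) k = 0 := by
      rw [← Submodule.Quotient.mk_eq_zero] at hb
      have : q (∑ k, b (a k) • C (a k)) = 0 := hb
      rw [map_sum] at this
      simpa using this
    have := (Fintype.linearIndependent_iff.1 hli) (fun k => b (a k)) h0
    simp [this]

end
end Topo


namespace Topo

section
open scoped Classical

variable {W : Type} [Fintype W] {H : SimpleGraph W} (S : EmbScheme H)

lemma sg_apply {α : Type} (a x : α) : sg a x = if x = a then 1 else 0 := by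
  unfold sg
  rw [Pi.single_apply]

/-- vertices of a zero-cell -/
def vtx : P0 S → Set W
  | Sum.inl v => {v}
  | Sum.inr _ => ∅

/-- vertices of a one-cell -/
def vends : I1 H → Set W
  | Sum.inl e => {v | v ∈ (e : Sym2 W)}
  | Sum.inr d => {d.fst}

/-- chains inside a vertex set -/
def RtIn (Q : Set W) (p q : P0 S) : Prop :=
  ∃ ρ : I1 H → ZMod 2, d1 S ρ = sg p + sg q ∧ ∀ i, ρ i ≠ 0 → vends i ⊆ Q

variable {S}

lemma RtIn.refl (Q : Set W) (p : P0 S) : RtIn S Q p p :=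
  ⟨0, by rw [map_zero, f2_add_self], fun i h => absurd rfl h⟩

lemma RtIn.symm {Q : Set W} {p q : P0 S} (h : RtIn S Q p q) : RtIn S Q q p := by
  obtain ⟨ρ, h1, h2⟩ := h
  exact ⟨ρ, by rw [h1, add_comm], h2⟩

lemma RtIn.trans {Q : Set W} {p q r : P0 S} (h : RtIn S Q p q) (h' : RtIn S Q q r) :
    RtIn S Q p r := by
  obtain ⟨ρ, h1, h2⟩ := h
  obtain ⟨ρ', h1', h2'⟩ := h'
  refine ⟨ρ + ρ', ?_, ?_⟩
  · rw [map_add, h1, h1', add_assoc, ← add_assoc (sg q) (sg q), f2_add_self, zero_add]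
  · intro i hi
    by_cases h : ρ i = 0
    · apply h2'
      intro h'
      apply hi
      rw [Pi.add_apply, h, h', add_zero]
    · exact h2 i h

lemma RtIn.mono {Q Q' : Set W} (hQ : Q ⊆ Q') {p q : P0 S} (h : RtIn S Q p q) : RtIn S Q' p q := by
  obtain ⟨ρ, h1, h2⟩ := h
  exact ⟨ρ, h1, fun i hi => (h2 i hi).trans hQ⟩

lemma sg_ne {α : Type} {a x : α} (h : sg a x ≠ 0) : x = a := by
  rw [sg_apply] at h
  by_contra h'
  simp [h'] at h

lemma RtIn.adj {Q : Set W} {a b : W} (h : H.Adj a b) (ha : a ∈ Q) (hb : b ∈ Q) :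
    RtIn S Q (Sum.inl a) (Sum.inl b) := by
  refine ⟨sg (Sum.inl (eo ⟨(a, b), h⟩)), ?_, ?_⟩
  · rw [d1_sg]
    simp only [e1, e2]
    rcases dartOf_eo (⟨(a, b), h⟩ : H.Dart) with h | h
    · rw [h]
    · rw [h, add_comm]; rfl
  · intro i hi
    rw [sg_ne hi]
    intro v hv
    have : v ∈ s(a, b) := hv
    rcases Sym2.mem_iff.1 this with rfl | rfl
    · exact ha
    · exact hb

lemma RtIn.corner {Q : Set W} (p : H.Dart × Bool) (hp : p.1.fst ∈ Q) :
    RtIn S Q (Sum.inl p.1.fst) (Sum.inr (fc S p)) := by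
  have key : ∀ d : H.Dart, d.fst ∈ Q → RtIn S Q (Sum.inl d.fst) (Sum.inr (fc S (d, true))) := by
    intro d hd
    refine ⟨sg (Sum.inr d), ?_, ?_⟩
    · rw [d1_sg]; rfl
    · intro i hi
      rw [sg_ne hi]
      intro v hv
      have : v = d.fst := hv
      rw [this]; exact hd
  rcases p with ⟨d, b⟩
  cases b
  · have hf : (S.rot.symm d).fst = d.fst := by
      rw [← S.rot_fst, Equiv.apply_symm_apply]
    have := key (S.rot.symm d) (by rw [hf]; exact hp)
    rw [← fc_rot, Equiv.apply_symm_apply, hf] at this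
    exact this
  · exact key d hp

/-- adjacency inside a set -/
def RS (H : SimpleGraph W) (N : Set W) (a b : W) : Prop := H.Adj a b ∧ a ∈ N ∧ b ∈ N

lemma RtIn.path {N : Set W} {a b : W} (h : Relation.ReflTransGen (RS H N) a b) :
    RtIn S N (Sum.inl a) (Sum.inl b) := by
  induction h with
  | refl => exact RtIn.refl _ _
  | tail _ h ih => exact ih.trans (RtIn.adj h.1 h.2.1 h.2.2)

variable {ι : Type} [Fintype ι] (D : ι → Set W)

/-- number of sets hit -/
noncomputable def hits (Q : Set W) : ℕ := {j | (D j ∩ Q).Nonempty}.ncard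

lemma hits_mono {Q Q' : Set W} (h : Q ⊆ Q') : hits D Q ≤ hits D Q' := by
  apply Set.ncard_le_ncard _ (Set.toFinite _)
  intro j hj
  exact hj.mono (Set.inter_subset_inter_right _ h)

lemma hits_union (Q Q' : Set W) : hits D (Q ∪ Q') ≤ hits D Q + hits D Q' := by
  refine le_trans (Set.ncard_le_ncard ?_ (Set.toFinite _)) (Set.ncard_union_le _ _)
  rintro j ⟨v, hv, h | h⟩
  · exact Or.inl ⟨v, hv, h⟩
  · exact Or.inr ⟨v, hv, h⟩

lemma hits_sing {κ : ℕ} (hk : ∀ v, {j | v ∈ D j}.ncard ≤ κ) (v : W) : hits D {v} ≤ κ := by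
  refine le_trans (Set.ncard_le_ncard ?_ (Set.toFinite _)) (hk v)
  rintro j ⟨w, hw, rfl⟩
  exact hw

lemma hits_empty : hits D ∅ = 0 := by
  unfold hits
  simp

lemma hits_biUnion {α : Type} (X : Finset α) (Q : α → Set W) (K : ℕ) (h : ∀ x ∈ X, hits D (Q x) ≤ K) :
    hits D (⋃ x ∈ X, Q x) ≤ X.card * K := by
  induction X using Finset.induction_on with
  | empty => simp [hits_empty]
  | insert a X ha ih =>
    rw [Finset.set_biUnion_insert, Finset.card_insert_of_notMem ha]
    refine (hits_union D _ _).trans ?_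
    have h1 := h a (by simp)
    have h2 := ih (fun x hx => h x (by simp [hx]))
    nlinarith

/-- root relation with bounded number of sets hit -/
def Rt (S : EmbScheme H) (K : ℕ) (p q : P0 S) : Prop :=
  ∃ Q, hits D Q ≤ K ∧ vtx S p ⊆ Q ∧ vtx S q ⊆ Q ∧ RtIn S Q p q

variable {D}

lemma Rt.trans {K K' : ℕ} {p q r : P0 S} (h : Rt D S K p q) (h' : Rt D S K' q r) :
    Rt D S (K + K') p r := by
  obtain ⟨Q, h1, h2, h3, h4⟩ := h
  obtain ⟨Q', h1', h2', h3', h4'⟩ := h'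
  exact ⟨Q ∪ Q', (hits_union D _ _).trans (add_le_add h1 h1'), h2.trans Set.subset_union_left,
    h3'.trans Set.subset_union_right,
    (h4.mono Set.subset_union_left).trans (h4'.mono Set.subset_union_right)⟩

lemma Rt.symm {K : ℕ} {p q : P0 S} (h : Rt D S K p q) : Rt D S K q p := by
  obtain ⟨Q, h1, h2, h3, h4⟩ := h
  exact ⟨Q, h1, h3, h2, h4.symm⟩

lemma Rt.mono {K K' : ℕ} (hK : K ≤ K') {p q : P0 S} (h : Rt D S K p q) : Rt D S K' p q := by
  obtain ⟨Q, h1, h2, h3, h4⟩ := h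
  exact ⟨Q, h1.trans hK, h2, h3, h4⟩

lemma Rt.adj {κ : ℕ} (hk : ∀ v, {j | v ∈ D j}.ncard ≤ κ) {a b : W} (h : a = b ∨ H.Adj a b) :
    Rt D S (κ + κ) (Sum.inl a) (Sum.inl b) := by
  refine ⟨{a} ∪ {b}, (hits_union D _ _).trans (add_le_add (hits_sing D hk a) (hits_sing D hk b)),
    Set.subset_union_left, Set.subset_union_right, ?_⟩
  rcases h with rfl | h
  · exact RtIn.refl _ _
  · exact RtIn.adj h (by simp) (by simp)

lemma Rt.ring {κ : ℕ} (hk : ∀ v, {j | v ∈ D j}.ncard ≤ κ) {p q : H.Dart × Bool}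
    (h : fc S p = fc S q) :
    Rt D S (κ + κ) (Sum.inl p.1.fst) (Sum.inl q.1.fst) := by
  refine ⟨{p.1.fst} ∪ {q.1.fst}, (hits_union D _ _).trans (add_le_add (hits_sing D hk _) (hits_sing D hk _)),
    Set.subset_union_left, Set.subset_union_right, ?_⟩
  have h1 := RtIn.corner (S := S) (Q := {p.1.fst} ∪ {q.1.fst}) p (by simp)
  have h2 := RtIn.corner (S := S) (Q := {p.1.fst} ∪ {q.1.fst}) q (by simp)
  rw [h] at h1
  exact h1.trans h2.symm

/-- constants -/
def cc (κ : ℕ) : ℕ → ℕ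
  | 0 => 1
  | n + 1 => 2 * (cc κ n + (κ + κ)) + (κ + κ)

variable {σ : Type} (ring : W → Option σ)

/-- allowed part -/
def NA (D : Set W) (A : Finset σ) : Set W := {v | v ∈ D ∧ ∀ r, ring v = some r → r ∈ A}

variable {ring}

lemma reach_or {A : Finset σ} {r : σ} {E : Set W} {p q : W}
    (hq : q ∈ NA ring E (insert r A))
    (h : Relation.ReflTransGen (RS H (NA ring E (insert r A))) p q) :
    (p ∈ NA ring E A ∧ Relation.ReflTransGen (RS H (NA ring E A)) p q) ∨
    ∃ x, ring x = some r ∧ (p = x ∨ ∃ x', Relation.ReflTransGen (RS H (NA ring E A)) p x' ∧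
      H.Adj x' x) := by
  have hcase : ∀ v, v ∈ NA ring E (insert r A) → ring v = some r ∨ v ∈ NA ring E A := by
    rintro v ⟨h1, h2⟩
    by_cases h : ring v = some r
    · exact Or.inl h
    · refine Or.inr ⟨h1, fun r' hr' => ?_⟩
      rcases Finset.mem_insert.1 (h2 r' hr') with rfl | h3
      · exact absurd hr' h
      · exact h3
  induction h using Relation.ReflTransGen.head_induction_on with
  | refl =>
    rcases hcase q hq with h | h
    · exact Or.inr ⟨q, h, Or.inl rfl⟩
    · exact Or.inl ⟨h, Relation.ReflTransGen.refl⟩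
  | @head a b hab _ ih =>
    rcases hcase a hab.2.1 with h | h
    · exact Or.inr ⟨a, h, Or.inl rfl⟩
    rcases ih with ⟨h1, h2⟩ | ⟨x, hx, rfl | ⟨x', h1, h2⟩⟩
    · exact Or.inl ⟨h, h2.head ⟨hab.1, h, h1⟩⟩
    · exact Or.inr ⟨b, hx, Or.inr ⟨a, Relation.ReflTransGen.refl, hab.1⟩⟩
    · rcases hcase b hab.2.2 with h' | h'
      · exact Or.inr ⟨b, h', Or.inr ⟨a, Relation.ReflTransGen.refl, hab.1⟩⟩
      · exact Or.inr ⟨x, hx, Or.inr ⟨x', h1.head ⟨hab.1, h, h'⟩, h2⟩⟩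

lemma RS_symm {N : Set W} {a b : W} (h : Relation.ReflTransGen (RS H N) a b) :
    Relation.ReflTransGen (RS H N) b a := by
  induction h with
  | refl => exact Relation.ReflTransGen.refl
  | tail _ h ih => exact ih.head ⟨h.1.symm, h.2.2, h.2.1⟩

lemma RS_end {N : Set W} {a b : W} (h : Relation.ReflTransGen (RS H N) a b) : a = b ∨ (a ∈ N ∧ b ∈ N) := by
  induction h with
  | refl => exact Or.inl rfl
  | tail _ h ih =>
    right
    rcases ih with rfl | ih
    · exact h.2
    · exact ⟨ih.1, h.2.2⟩

lemma Rt_NA {κ : ℕ} (hk1 : 1 ≤ κ) (hk : ∀ v, {j | v ∈ D j}.ncard ≤ κ)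
    (hn : ∀ v, ring v = none → {j | v ∈ D j}.ncard ≤ 1)
    (hr : ∀ u v r, ring u = some r → ring v = some r → ∃ p q : H.Dart × Bool, p.1.fst = u ∧
      q.1.fst = v ∧ fc S p = fc S q) (i : ι) (A : Finset σ) :
    ∀ p q, p ∈ NA ring (D i) A → q ∈ NA ring (D i) A →
      Relation.ReflTransGen (RS H (NA ring (D i) A)) p q →
      Rt D S (cc κ A.card) (Sum.inl p) (Sum.inl q) := by
  induction A using Finset.induction_on with
  | empty =>
    intro p q hp hq h
    refine ⟨NA ring (D i) ∅, ?_, by simpa [vtx] using hp, by simpa [vtx] using hq, RtIn.path h⟩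
    have : {j | (D j ∩ NA ring (D i) ∅).Nonempty} ⊆ {i} := by
      rintro j ⟨v, hv, hv2, hv3⟩
      have : ring v = none := by
        by_contra h
        obtain ⟨r, hr⟩ := Option.ne_none_iff_exists'.1 h
        simpa using hv3 r hr
      have h1 := (Set.ncard_le_one (Set.toFinite _)).1 (hn v this)
      exact h1 j hv i hv2
    calc hits D (NA ring (D i) ∅) ≤ ({i} : Set ι).ncard := Set.ncard_le_ncard this (Set.toFinite _)
      _ = 1 := Set.ncard_singleton _
      _ ≤ _ := by simp [cc]
  | insert r A hrA ih =>
    intro p q hp hq h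
    rw [Finset.card_insert_of_notMem hrA]
    have key : ∀ p, p ∈ NA ring (D i) (insert r A) → ∀ x, ring x = some r →
        (p = x ∨ ∃ x', Relation.ReflTransGen (RS H (NA ring (D i) A)) p x' ∧ H.Adj x' x) →
        Rt D S (cc κ A.card + (κ + κ)) (Sum.inl p) (Sum.inl x) := by
      rintro p hp x hx (rfl | ⟨x', h1, h2⟩)
      · exact (Rt.adj hk (Or.inl rfl)).mono (by omega)
      · rcases RS_end h1 with rfl | ⟨h3, h4⟩
        · exact (Rt.adj hk (Or.inr h2)).mono (by omega)
        · exact (ih p x' h3 h4 h1).trans (Rt.adj hk (Or.inr h2))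
    rcases reach_or hq h with ⟨h1, h2⟩ | ⟨x, hx, h1⟩
    · have hq' : q ∈ NA ring (D i) A := by
        rcases RS_end h2 with rfl | h3
        · exact h1
        · exact h3.2
      exact (ih p q h1 hq' h2).mono (by simp only [cc]; omega)
    · rcases reach_or hp (RS_symm h) with ⟨h3, h2⟩ | ⟨y, hy, h2⟩
      · have hp' : p ∈ NA ring (D i) A := by
          rcases RS_end h2 with rfl | h3'
          · exact h3
          · exact h3'.2
        exact (ih p q hp' h3 (RS_symm h2)).mono (by simp only [cc]; omega)
      · obtain ⟨f, f', rfl, rfl, hff⟩ := hr x y r hx hy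
        have e := ((key p hp _ hx h1).trans (Rt.ring hk hff)).trans (key q hq _ hy h2).symm
        exact e.mono (by simp only [cc]; omega)

lemma first_used {p0 : W} (hp0 : ∃ j, p0 ∈ D j) {v : W} (h : H.Reachable v p0) :
    ∃ x j, x ∈ D j ∧ Relation.ReflTransGen (RS H ({v | ∀ j, v ∉ D j} ∪ {x})) v x := by
  obtain ⟨w⟩ := h
  induction w with
  | nil => obtain ⟨j, hj⟩ := hp0; exact ⟨_, j, hj, Relation.ReflTransGen.refl⟩
  | @cons a b c hab w ih =>
    by_cases ha : ∃ j, a ∈ D j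
    · obtain ⟨j, hj⟩ := ha; exact ⟨a, j, hj, Relation.ReflTransGen.refl⟩
    · obtain ⟨x, j, hx, h⟩ := ih hp0
      refine ⟨x, j, hx, h.head ⟨hab, Or.inl (by simpa using ha), ?_⟩⟩
      rcases RS_end h with rfl | h
      · exact Or.inr rfl
      · exact h.1

end
end Topo


namespace Topo

section
open scoped Classical

variable {W : Type} [Fintype W] {H : SimpleGraph W} (S : EmbScheme H)

/-- corner of a flag -/
def tc (p : H.Dart × Bool) : H.Dart := if p.2 then p.1 else S.rot.symm p.1

lemma tc_fst (p : H.Dart × Bool) : (tc S p).fst = p.1.fst := by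
  rcases p with ⟨d, b⟩
  cases b
  · simp only [tc]
    rw [← S.rot_fst]; simp
  · rfl

lemma fc_tc (p : H.Dart × Bool) : fc S (tc S p, true) = fc S p := by
  rcases p with ⟨d, b⟩
  cases b
  · simp only [tc]
    rw [← fc_rot]; simp
  · rfl

lemma d2_sg_inr (p : H.Dart × Bool) (d : H.Dart) :
    sg p (d, true) + sg p (S.rot d, false) = sg (Sum.inr (tc S p) : I1 H) (Sum.inr d) := by
  rcases p with ⟨d', b⟩
  simp only [sg_apply]
  cases b
  · have : (S.rot d = d') ↔ d = S.rot.symm d' := by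
      rw [Equiv.eq_symm_apply]
    simp [tc, this]
  · simp [tc]

lemma d2_tri (e : H.edgeSet) (b : Bool) :
    d2 S (sg (dartOf e, b) + sg (th S (dartOf e, b))) =
      sg (Sum.inl e) + sg (Sum.inr (tc S (dartOf e, b))) + sg (Sum.inr (tc S (th S (dartOf e, b)))) := by
  funext c
  rcases c with e' | d
  · rw [d2_inl]
    simp only [Pi.add_apply, sg_apply, Sum.inl.injEq, reduceCtorEq, if_false, add_zero]
    have hne : ∀ b', ((dartOf e', b') : H.Dart × Bool) ≠ th S (dartOf e, b) := by
      intro b' h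
      have h1 : dartOf e' = (dartOf e).symm := congrArg Prod.fst h
      have h2 : e' = e := by
        rw [← eo_dartOf e', h1, eo_symm, eo_dartOf]
      subst h2
      exact Dart.symm_ne _ h1.symm
    simp only [hne, if_false, add_zero, Prod.mk.injEq]
    by_cases h : e' = e
    · subst h
      cases b <;> simp
    · have : dartOf e' ≠ dartOf e := by
        intro h'
        apply h
        rw [← eo_dartOf e', h', eo_dartOf]
      simp [h, this]
  · rw [d2_inr]
    simp only [Pi.add_apply]
    have h1 := d2_sg_inr S (dartOf e, b) d
    have h2 := d2_sg_inr S (th S (dartOf e, b)) d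
    rw [← h1, ← h2]
    have : sg (Sum.inl e : I1 H) (Sum.inr d : I1 H) = 0 := by simp [sg_apply]
    rw [this]
    ring

lemma tri_mem (p : H.Dart × Bool) : sg p + sg (th S p) ∈ X2 S := by
  intro q
  simp only [Pi.add_apply, sg_apply]
  have h1 : th S q = p ↔ q = th S p := by
    constructor
    · rintro rfl; rw [th_th]
    · rintro rfl; rw [th_th]
  have h2 : th S q = th S p ↔ q = p := by
    constructor
    · intro h; rw [← th_th S q, h, th_th]
    · rintro rfl; rfl
  simp only [h1, h2]
  by_cases h3 : q = p <;> by_cases h4 : q = th S p <;> simp [h3, h4, th_ne, (th_ne S p).symm]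

lemma const_mem (c : ZMod 2) : (fun _ => c) ∈ X2 S := fun _ => rfl

lemma d2_const (c : ZMod 2) : d2 S (fun _ => c) = 0 := by
  funext i
  rcases i with e | d
  · rw [d2_inl]; exact f2_add_self c
  · rw [d2_inr]; exact f2_add_self c

variable {ι : Type} [Fintype ι] {D : ι → Set W}

lemma normalize (hconn : ∀ i, ∀ a ∈ D i, ∀ b ∈ D i, Relation.ReflTransGen (RS H (D i)) a b)
    (htouch : ∀ i j, ∃ a ∈ D i, ∃ b ∈ D j, a = b ∨ H.Adj a b)
    (hiso : ∀ i, ∀ v ∈ D i, ∃ w, H.Adj v w)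
    {y : H.Dart × Bool → ZMod 2} (hy : y ∈ X2 S) {Q : Set W}
    (hQ : ∀ c, d2 S y c ≠ 0 → vends c ⊆ Q) :
    ∃ y' ∈ X2 S, d2 S y' = d2 S y ∧ ∀ j, Disjoint (D j) Q → ∀ p : H.Dart × Bool, p.1.fst ∈ D j → y' p = 0 := by
  have hat : ∀ v, v ∉ Q → ∀ p q : H.Dart × Bool, p.1.fst = v → q.1.fst = v → y p = y q := by
    intro v hv
    apply ker_at S hy
    · intro d hd
      by_contra h
      apply hv
      apply hQ _ h
      show v ∈ d.edge
      rw [← hd]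
      exact Sym2.mem_mk_left _ _
    · intro d hd
      by_contra h
      apply hv
      apply hQ _ h
      exact hd.symm
  have hadj : ∀ a b, H.Adj a b → a ∉ Q → b ∉ Q →
      ∀ p q : H.Dart × Bool, p.1.fst = a → q.1.fst = b → y p = y q := by
    intro a b hab ha hb p q hp hq
    obtain ⟨s, hs⟩ := ker_cross S hy ⟨(a, b), hab⟩
    rw [hat a ha p (⟨(a, b), hab⟩, true) hp rfl, hs]
    exact hat b hb _ _ rfl hq
  have hpath : ∀ j, Disjoint (D j) Q → ∀ a b, a ∈ D j → Relation.ReflTransGen (RS H (D j)) a b →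
      ∀ p q : H.Dart × Bool, p.1.fst = a → q.1.fst = b → y p = y q := by
    intro j hj a b ha h
    have hnot : ∀ v ∈ D j, v ∉ Q := fun v hv => Set.disjoint_left.1 hj hv
    induction h with
    | refl => exact hat a (hnot a ha)
    | @tail b c _ hbc ih =>
      intro p q hp hq
      rw [ih p (⟨(b, c), hbc.1⟩, true) hp rfl]
      exact hadj b c hbc.1 (hnot _ hbc.2.1) (hnot _ hbc.2.2) _ _ rfl hq
  have hall : ∀ j j', Disjoint (D j) Q → Disjoint (D j') Q → ∀ p q : H.Dart × Bool, p.1.fst ∈ D j →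
      q.1.fst ∈ D j' → y p = y q := by
    intro j j' hj hj' p q hp hq
    obtain ⟨a, ha, b, hb, hab⟩ := htouch j j'
    obtain ⟨a', ha'⟩ := hiso j a ha
    obtain ⟨b', hb'⟩ := hiso j' b hb
    rw [hpath j hj _ a hp (hconn j _ hp a ha) p (⟨(a, a'), ha'⟩, true) rfl rfl]
    rw [hpath j' hj' _ b hq (hconn j' _ hq b hb) q (⟨(b, b'), hb'⟩, true) rfl rfl]
    rcases hab with rfl | hab
    · exact hat a (Set.disjoint_left.1 hj ha) _ _ rfl rfl
    · exact hadj a b hab (Set.disjoint_left.1 hj ha) (Set.disjoint_left.1 hj' hb) _ _ rfl rfl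
  by_cases hex : ∃ j, Disjoint (D j) Q ∧ ∃ p : H.Dart × Bool, p.1.fst ∈ D j
  · obtain ⟨j, hj, p, hp⟩ := hex
    refine ⟨y + fun _ => y p, Submodule.add_mem _ hy (const_mem S _), by rw [map_add, d2_const, add_zero], ?_⟩
    intro j' hj' q hq
    rw [Pi.add_apply, hall j j' hj hj' p q hp hq]
    exact f2_add_self _
  · refine ⟨y, hy, rfl, ?_⟩
    intro j hj p hp
    exact absurd ⟨j, hj, p, hp⟩ hex

variable {σ : Type} [Fintype σ] {ring : W → Option σ}

/-- the uniform root bound -/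
def KK (κ s : ℕ) : ℕ := 2 * cc κ s + 4 * κ

lemma roots {κ : ℕ} (hk1 : 1 ≤ κ) (hk : ∀ v, {j | v ∈ D j}.ncard ≤ κ)
    (hn : ∀ v, ring v = none → {j | v ∈ D j}.ncard ≤ 1)
    (hr : ∀ u v r, ring u = some r → ring v = some r → ∃ p q : H.Dart × Bool, p.1.fst = u ∧
      q.1.fst = v ∧ fc S p = fc S q)
    (hconn : ∀ i, ∀ a ∈ D i, ∀ b ∈ D i, Relation.ReflTransGen (RS H (D i)) a b)
    (htouch : ∀ i j, ∃ a ∈ D i, ∃ b ∈ D j, a = b ∨ H.Adj a b) {p0 : W} {i0 : ι} (hp0 : p0 ∈ D i0)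
    {v : W} (hv : H.Reachable v p0) :
    Rt D S (2 * cc κ (Fintype.card σ) + 3 * κ) (Sum.inl v) (Sum.inl p0) := by
  have hin : ∀ i, ∀ a ∈ D i, ∀ b ∈ D i, Rt D S (cc κ (Fintype.card σ)) (Sum.inl a) (Sum.inl b) := by
    intro i a ha b hb
    have hU : NA ring (D i) Finset.univ = D i := by
      ext v; simp [NA]
    have := Rt_NA hk1 hk hn hr i Finset.univ a b (by rwa [hU]) (by rwa [hU]) (by rw [hU]; exact hconn i a ha b hb)
    rwa [Finset.card_univ] at this
  obtain ⟨x, j, hx, hvx⟩ := first_used (D := D) ⟨i0, hp0⟩ hv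
  have h1 : Rt D S κ (Sum.inl v) (Sum.inl x) := by
    refine ⟨{v | ∀ j, v ∉ D j} ∪ {x}, ?_, ?_, ?_, RtIn.path hvx⟩
    · refine (hits_union D _ _).trans ?_
      have h2 : hits D {v | ∀ j, v ∉ D j} = 0 := by
        unfold hits
        rw [Set.ncard_eq_zero (Set.toFinite _)]
        ext j
        simp only [Set.mem_ofPred_eq, Set.mem_empty_iff_false, iff_false]
        rintro ⟨v, hv, h⟩
        exact h j hv
      have h3 := hits_sing D hk x
      omega
    · intro w hw
      have : w = v := hw
      subst this
      rcases RS_end hvx with rfl | h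
      · exact Or.inr rfl
      · exact h.1
    · exact Set.subset_union_right
  obtain ⟨a, ha, b, hb, hab⟩ := htouch j i0
  have := ((h1.trans (hin j x hx a ha)).trans (Rt.adj hk hab)).trans (hin i0 b hb p0 hp0)
  exact this.mono (by omega)

theorem topo_main {g κ : ℕ} (hg : S.GenusLE g) (hk1 : 1 ≤ κ) (hk : ∀ v, {j | v ∈ D j}.ncard ≤ κ)
    (hn : ∀ v, ring v = none → {j | v ∈ D j}.ncard ≤ 1)
    (hr : ∀ u v r, ring u = some r → ring v = some r → ∃ p q : H.Dart × Bool, p.1.fst = u ∧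
      q.1.fst = v ∧ fc S p = fc S q)
    (hconn : ∀ i, ∀ a ∈ D i, ∀ b ∈ D i, Relation.ReflTransGen (RS H (D i)) a b)
    (htouch : ∀ i j, ∃ a ∈ D i, ∃ b ∈ D j, a = b ∨ H.Adj a b) :
    Fintype.card ι ≤ κ + (3 + 2 * g) * KK κ (Fintype.card σ) := by
  by_contra hT
  push Not at hT
  set K := KK κ (Fintype.card σ) with hK
  have hT1 : κ < Fintype.card ι := by
    have := Nat.zero_le ((3 + 2 * g) * K); omega
  have hT2 : (3 + 2 * g) * K < Fintype.card ι := by omega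
  -- no isolated vertices in the sets
  have hiso : ∀ i, ∀ v ∈ D i, ∃ w, H.Adj v w := by
    intro i v hv
    by_contra hno
    push Not at hno
    have hall : ∀ j, v ∈ D j := by
      intro j
      obtain ⟨a, ha, b, hb, hab⟩ := htouch i j
      have hva : v = a := by
        rcases Relation.ReflTransGen.cases_head (hconn i v hv a ha) with h | ⟨c, h, _⟩
        · exact h
        · exact absurd h.1 (hno c)
      subst hva
      rcases hab with rfl | h
      · exact hb
      · exact absurd h (hno b)
    have := hk v
    rw [show {j | v ∈ D j} = Set.univ from Set.eq_univ_of_forall hall, Set.ncard_univ,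
      Nat.card_eq_fintype_card] at this
    omega
  obtain ⟨i0⟩ : Nonempty ι := Fintype.card_pos_iff.1 (by omega)
  obtain ⟨p0, hp0, -⟩ := htouch i0 i0
  let InG : P0 S → Prop := fun p => match p with
    | Sum.inl v => H.Reachable v p0
    | Sum.inr f => ∃ q : H.Dart × Bool, fc S q = f ∧ H.Reachable q.1.fst p0
  have hroot : ∀ p : P0 S, ∃ (ρ : I1 H → ZMod 2) (Q : Set W), hits D Q ≤ K ∧ (InG p →
      vtx S p ⊆ Q ∧ d1 S ρ = sg p + sg (Sum.inl p0) ∧ ∀ i, ρ i ≠ 0 → vends i ⊆ Q) := by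
    intro p
    by_cases hp : InG p
    · have : Rt D S K p (Sum.inl p0) := by
        rcases p with v | f
        · exact (roots S hk1 hk hn hr hconn htouch hp0 hp).mono (by rw [hK]; unfold KK; omega)
        · obtain ⟨q, rfl, hq⟩ := hp
          have h1 := roots S hk1 hk hn hr hconn htouch hp0 hq
          have h2 : Rt D S κ (Sum.inr (fc S q)) (Sum.inl q.1.fst) :=
            ⟨{q.1.fst}, hits_sing D hk _, Set.empty_subset _, subset_rfl, (RtIn.corner q (Set.mem_singleton _)).symm⟩
          exact (h2.trans h1).mono (by rw [hK]; unfold KK; omega)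
      obtain ⟨Q, h1, h2, h3, ρ, h4, h5⟩ := this
      exact ⟨ρ, Q, h1, fun _ => ⟨h2, h4, h5⟩⟩
    · exact ⟨0, ∅, by rw [hits_empty]; omega, fun h => absurd h hp⟩
  choose ρ Q hQK hρ using hroot
  let InC : I1 H → Prop := fun i => InG (e1 S i)
  have hC2 : ∀ i, InC i → InG (e2 S i) := by
    rintro (e | d) h
    · have h' : H.Reachable (dartOf e).fst p0 := h
      exact ((dartOf e).adj.symm.reachable).trans h'
    · exact ⟨(d, true), rfl, h⟩
  let C : I1 H → I1 H → ZMod 2 := fun i => if InC i then sg i + ρ (e1 S i) + ρ (e2 S i) else 0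
  have hCpos : ∀ i, InC i → C i = sg i + ρ (e1 S i) + ρ (e2 S i) := fun i h => if_pos h
  have hCneg : ∀ i, ¬ InC i → C i = 0 := fun i h => if_neg h
  have hCz : ∀ i, d1 S (C i) = 0 := by
    intro i
    by_cases h : InC i
    · rw [hCpos i h, map_add, map_add, d1_sg, (hρ _ h).2.1, (hρ _ (hC2 i h)).2.1]
      have := f2_add_self (sg (e1 S i) + sg (e2 S i) + sg (Sum.inl p0))
      rw [← this]
      abel
    · rw [hCneg i h, map_zero]
  let QQ : I1 H → Set W := fun i => Q (e1 S i) ∪ Q (e2 S i)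
  have hQQ : ∀ i, hits D (QQ i) ≤ 2 * K := fun i =>
    (hits_union D _ _).trans (by have := hQK (e1 S i); have := hQK (e2 S i); omega)
  have hvend : ∀ i, InC i → vends i ⊆ QQ i := by
    intro i hi
    have h1 := (hρ _ hi).1
    have h2 := (hρ _ (hC2 i hi)).1
    rcases i with e | d
    · intro v hv
      have hv' : v ∈ (dartOf e).edge := by rw [dartOf_edge]; exact hv
      rcases Sym2.mem_iff.1 hv' with rfl | rfl
      · exact Or.inl (h1 rfl)
      · exact Or.inr (h2 rfl)
    · intro v hv
      exact Or.inl (h1 hv)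
  have hsupp : ∀ i c, C i c ≠ 0 → vends c ⊆ QQ i := by
    intro i c hc
    by_cases h : InC i
    · rw [hCpos i h] at hc
      by_cases h1 : c = i
      · rw [h1]; exact hvend i h
      by_cases h2 : ρ (e1 S i) c = 0
      · by_cases h3 : ρ (e2 S i) c = 0
        · exfalso
          apply hc
          simp only [Pi.add_apply, h2, h3, sg_apply, if_neg h1, add_zero]
        · exact ((hρ _ (hC2 i h)).2.2 c h3).trans Set.subset_union_right
      · exact ((hρ _ h).2.2 c h2).trans Set.subset_union_left
    · rw [hCneg i h] at hc
      exact absurd rfl hc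
  obtain ⟨X, hXg, hX1, hX2⟩ := choose_basis S hg C hCz
  set Th : Set W := ⋃ x ∈ X, QQ x with hTh
  have hThK : hits D Th ≤ X.card * (2 * K) := hits_biUnion D X QQ _ (fun x _ => hQQ x)
  have hY : ∀ i, ∃ (y : H.Dart × Bool → ZMod 2) (a : I1 H → ZMod 2), (¬ InC i → y = 0) ∧
      y ∈ X2 S ∧ (InC i → d2 S y = C i + ∑ x ∈ X, a x • C x ∧
        ∀ j, Disjoint (D j) (QQ i ∪ Th) → ∀ p : H.Dart × Bool, p.1.fst ∈ D j → y p = 0) := by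
    intro i
    by_cases h : InC i
    · obtain ⟨a, y, hy, hya⟩ := hX1 i
      have hsup : ∀ c, d2 S y c ≠ 0 → vends c ⊆ QQ i ∪ Th := by
        intro c hc
        rw [hya] at hc
        by_cases h1 : C i c = 0
        · by_cases h2 : ∃ x ∈ X, C x c ≠ 0
          · obtain ⟨x, hx, hxc⟩ := h2
            refine (hsupp x c hxc).trans (Set.Subset.trans ?_ Set.subset_union_right)
            exact Set.subset_biUnion_of_mem (u := fun x => QQ x) hx
          · push Not at h2
            exfalso
            apply hc
            rw [Pi.add_apply, h1, zero_add, Finset.sum_apply]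
            apply Finset.sum_eq_zero
            intro x hx
            rw [Pi.smul_apply, h2 x hx, smul_zero]
        · exact (hsupp i c h1).trans Set.subset_union_left
      obtain ⟨y', hy', hd, hz⟩ := normalize S hconn htouch hiso hy hsup
      exact ⟨y', a, fun h' => absurd h h', hy', fun _ => ⟨by rw [hd, hya], hz⟩⟩
    · exact ⟨0, 0, fun _ => rfl, Submodule.zero_mem _, fun h' => absurd h' h⟩
  choose Y a hY0 hYm hYd using hY
  -- the flag psi
  obtain ⟨w0, hw0⟩ := hiso i0 p0 hp0
  let psi : H.Dart × Bool := (⟨(p0, w0), hw0⟩, true)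
  let kap : H.edgeSet → Bool → (H.Dart × Bool → ZMod 2) := fun e b =>
    Y (Sum.inl e) + Y (Sum.inr (tc S (dartOf e, b))) + Y (Sum.inr (tc S (th S (dartOf e, b)))) +
      (sg (dartOf e, b) + sg (th S (dartOf e, b)))
  have hkap : ∀ e b, kap e b psi = 0 := by
    intro e b
    by_cases he : H.Reachable (dartOf e).fst p0
    · have he2 : H.Reachable (dartOf e).snd p0 := ((dartOf e).adj.symm.reachable).trans he
      have i1 : InC (Sum.inl e) := he
      have i2 : InC (Sum.inr (tc S (dartOf e, b))) := by
        show H.Reachable (tc S (dartOf e, b)).fst p0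
        rw [tc_fst]; exact he
      have i3 : InC (Sum.inr (tc S (th S (dartOf e, b)))) := by
        show H.Reachable (tc S (th S (dartOf e, b))).fst p0
        rw [tc_fst]; exact he2
      have hmem : kap e b ∈ X2 S := Submodule.add_mem _ (Submodule.add_mem _ (Submodule.add_mem _
        (hYm _) (hYm _)) (hYm _)) (tri_mem S _)
      -- ends
      have ee1 : e1 S (Sum.inr (tc S (dartOf e, b))) = Sum.inl (dartOf e).fst := by
        show Sum.inl _ = Sum.inl _
        rw [tc_fst]
      have ee2 : e2 S (Sum.inr (tc S (dartOf e, b))) = Sum.inr (fc S (dartOf e, b)) := by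
        show Sum.inr _ = Sum.inr _
        rw [fc_tc]
      have ee3 : e1 S (Sum.inr (tc S (th S (dartOf e, b)))) = Sum.inl (dartOf e).snd := by
        show Sum.inl _ = Sum.inl _
        rw [tc_fst]; rfl
      have ee4 : e2 S (Sum.inr (tc S (th S (dartOf e, b)))) = Sum.inr (fc S (dartOf e, b)) := by
        show Sum.inr _ = Sum.inr _
        rw [fc_tc, fc_th]
      have hd : d2 S (kap e b) = ∑ x ∈ X, (a (Sum.inl e) x + a (Sum.inr (tc S (dartOf e, b))) x +
          a (Sum.inr (tc S (th S (dartOf e, b)))) x) • C x := by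
        simp only [kap]
        rw [map_add, map_add, map_add, d2_tri, (hYd _ i1).1, (hYd _ i2).1, (hYd _ i3).1,
          hCpos _ i1, hCpos _ i2, hCpos _ i3, ee1, ee2, ee3, ee4]
        simp only [add_smul, Finset.sum_add_distrib]
        show _ + ρ (Sum.inl (dartOf e).fst) + ρ (Sum.inl (dartOf e).snd) + _ + _ + _ + _ = _
        have := f2_add_self (sg (Sum.inl e : I1 H) + sg (Sum.inr (tc S (dartOf e, b)) : I1 H) +
          sg (Sum.inr (tc S (th S (dartOf e, b))) : I1 H) + ρ (Sum.inl (dartOf e).fst) +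
          ρ (Sum.inl (dartOf e).snd) + ρ (Sum.inr (fc S (dartOf e, b))))
        rw [← sub_eq_zero, ← this]
        abel
      have hd0 : d2 S (kap e b) = 0 := by
        rw [hd]
        apply hX2 (fun x => a (Sum.inl e) x + a (Sum.inr (tc S (dartOf e, b))) x +
          a (Sum.inr (tc S (th S (dartOf e, b)))) x)
        rw [← hd]
        exact ⟨_, hmem, rfl⟩
      -- an unhit set
      let Qa := (Q (Sum.inl (dartOf e).fst) ∪ Q (Sum.inl (dartOf e).snd) ∪
        Q (Sum.inr (fc S (dartOf e, b)))) ∪ Th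
      have hQa : hits D Qa ≤ (3 + 2 * g) * K := by
        have h1 : hits D Qa ≤ _ := hits_union D (Q (Sum.inl (dartOf e).fst) ∪ Q (Sum.inl (dartOf e).snd) ∪
          Q (Sum.inr (fc S (dartOf e, b)))) Th
        have h2 := hits_union D (Q (Sum.inl (dartOf e).fst) ∪ Q (Sum.inl (dartOf e).snd))
          (Q (Sum.inr (fc S (dartOf e, b))))
        have h3 := hits_union D (Q (Sum.inl (dartOf e).fst)) (Q (Sum.inl (dartOf e).snd))
        have h4 := hQK (Sum.inl (dartOf e).fst)
        have h5 := hQK (Sum.inl (dartOf e).snd)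
        have h6 := hQK (Sum.inr (fc S (dartOf e, b)))
        have h7 : X.card * (2 * K) ≤ g * (2 * K) := Nat.mul_le_mul_right _ hXg
        have h8 : (3 + 2 * g) * K = K + K + K + g * (2 * K) := by ring
        omega
      have hunhit : ∃ j, Disjoint (D j) Qa := by
        by_contra hno
        push Not at hno
        have : {j | (D j ∩ Qa).Nonempty} = Set.univ := by
          apply Set.eq_univ_of_forall
          intro j
          exact Set.not_disjoint_iff_nonempty_inter.1 (hno j)
        have h2 : hits D Qa = Fintype.card ι := by
          unfold hits
          rw [this, Set.ncard_univ, Nat.card_eq_fintype_card]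
        omega
      obtain ⟨j, hj⟩ := hunhit
      obtain ⟨v, hv, -⟩ := htouch j j
      obtain ⟨w, hw⟩ := hiso j v hv
      let f0 : H.Dart × Bool := (⟨(v, w), hw⟩, true)
      have hvr : H.Reachable p0 v := by
        obtain ⟨x, hx, z, hz, hxz⟩ := htouch i0 j
        have hre : ∀ i, ∀ x ∈ D i, ∀ z ∈ D i, H.Reachable x z := by
          intro i x hx z hz
          have := hconn i x hx z hz
          clear hz
          induction this with
          | refl => exact Reachable.refl _
          | tail _ h ih => exact ih.trans h.1.reachable
        have hxz' : H.Reachable x z := by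
          rcases hxz with rfl | h
          · exact Reachable.refl _
          · exact h.reachable
        exact ((hre i0 p0 hp0 x hx).trans hxz').trans (hre j z hz v hv)
      rw [ker_reach S hmem hd0 hvr psi f0 rfl rfl]
      have z1 : Y (Sum.inl e) f0 = 0 := by
        refine (hYd _ i1).2 j (hj.mono_right ?_) f0 hv
        rintro x ((h | h) | h)
        · exact Or.inl (Or.inl (Or.inl h))
        · exact Or.inl (Or.inl (Or.inr h))
        · exact Or.inr h
      have z2 : Y (Sum.inr (tc S (dartOf e, b))) f0 = 0 := by
        refine (hYd _ i2).2 j (hj.mono_right ?_) f0 hv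
        simp only [QQ]
        rw [ee1, ee2]
        rintro x ((h | h) | h)
        · exact Or.inl (Or.inl (Or.inl h))
        · exact Or.inl (Or.inr h)
        · exact Or.inr h
      have z3 : Y (Sum.inr (tc S (th S (dartOf e, b)))) f0 = 0 := by
        refine (hYd _ i3).2 j (hj.mono_right ?_) f0 hv
        simp only [QQ]
        rw [ee3, ee4]
        rintro x ((h | h) | h)
        · exact Or.inl (Or.inl (Or.inr h))
        · exact Or.inl (Or.inr h)
        · exact Or.inr h
      have hvQ : v ∉ Qa := Set.disjoint_left.1 hj hv
      have z4 : sg (dartOf e, b) f0 = 0 := by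
        rw [sg_apply, if_neg]
        intro h
        apply hvQ
        have : v = (dartOf e).fst := congrArg (fun z : H.Dart × Bool => z.1.fst) h
        rw [this]
        exact Or.inl (Or.inl (Or.inl ((hρ _ (show InG (Sum.inl (dartOf e).fst) from he)).1 rfl)))
      have z5 : sg (th S (dartOf e, b)) f0 = 0 := by
        rw [sg_apply, if_neg]
        intro h
        apply hvQ
        have : v = (dartOf e).snd := congrArg (fun z : H.Dart × Bool => z.1.fst) h
        rw [this]
        exact Or.inl (Or.inl (Or.inr ((hρ _ (show InG (Sum.inl (dartOf e).snd) from he2)).1 rfl)))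
      simp only [kap, Pi.add_apply, z1, z2, z3, z4, z5, add_zero]
    · have he2 : ¬ H.Reachable (dartOf e).snd p0 := fun h => he ((dartOf e).adj.reachable.trans h)
      have i1 : ¬ InC (Sum.inl e) := he
      have i2 : ¬ InC (Sum.inr (tc S (dartOf e, b))) := by
        show ¬ H.Reachable (tc S (dartOf e, b)).fst p0
        rw [tc_fst]; exact he
      have i3 : ¬ InC (Sum.inr (tc S (th S (dartOf e, b)))) := by
        show ¬ H.Reachable (tc S (th S (dartOf e, b))).fst p0
        rw [tc_fst]; exact he2
      have z4 : sg (dartOf e, b) psi = 0 := by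
        rw [sg_apply, if_neg]
        intro h
        apply he
        have : p0 = (dartOf e).fst := congrArg (fun z : H.Dart × Bool => z.1.fst) h
        rw [← this]
      have z5 : sg (th S (dartOf e, b)) psi = 0 := by
        rw [sg_apply, if_neg]
        intro h
        apply he2
        have : p0 = (dartOf e).snd := congrArg (fun z : H.Dart × Bool => z.1.fst) h
        rw [← this]
      have w1 : Y (Sum.inl e) = 0 := hY0 _ i1
      have w2 : Y (Sum.inr (tc S (dartOf e, b))) = 0 := hY0 _ i2
      have w3 : Y (Sum.inr (tc S (th S (dartOf e, b)))) = 0 := hY0 _ i3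
      simp only [kap, Pi.add_apply, z4, z5, w1, w2, w3, Pi.zero_apply, add_zero]
  have hsum : ∑ e : H.edgeSet, ∑ b : Bool, kap e b psi = 0 :=
    Finset.sum_eq_zero fun e _ => Finset.sum_eq_zero fun b _ => hkap e b
  have hA : ∑ p : H.Dart × Bool, (Y (Sum.inr (tc S p)) psi + sg p psi) = 1 := by
    rw [Finset.sum_add_distrib]
    have h1 : ∑ p : H.Dart × Bool, sg p psi = 1 := by
      rw [Finset.sum_eq_single psi]
      · rw [sg_apply, if_pos rfl]
      · intro p _ hp
        rw [sg_apply, if_neg hp.symm]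
      · intro h
        exact absurd (Finset.mem_univ _) h
    have h2 : ∑ p : H.Dart × Bool, Y (Sum.inr (tc S p)) psi = 0 := by
      rw [Fintype.sum_prod_type]
      simp only [Fintype.sum_bool, Finset.sum_add_distrib]
      have h3 : ∑ d : H.Dart, Y (Sum.inr (tc S (d, false))) psi =
          ∑ d : H.Dart, Y (Sum.inr (tc S (d, true))) psi := by
        simp only [tc]
        exact Equiv.sum_comp S.rot.symm (fun d => Y (Sum.inr d) psi)
      rw [h3]
      exact f2_add_self _
    rw [h1, h2, zero_add]
  rw [sum_flags S] at hA
  have hB : ∑ e : H.edgeSet, ∑ b : Bool, kap e b psi = 1 := by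
    rw [← hA]
    apply Finset.sum_congr rfl
    intro e _
    simp only [kap, Pi.add_apply, Fintype.sum_bool]
    have := f2_add_self (Y (Sum.inl e) psi)
    linear_combination this
  rw [hsum] at hB
  exact absurd hB (by decide)

end
end Topo


namespace Topo

section
open scoped Classical

lemma cc_mono (κ : ℕ) : Monotone (cc κ) := by
  apply monotone_nat_of_le_succ
  intro n
  simp only [cc]
  omega

/-- clique minor bound -/
def TT (k : ℕ) : ℕ := (k + 1) + (3 + 2 * k) * KK (k + 1) k

lemma zmod_const {m : ℕ} (hm : 3 ≤ m) {α : Type*} (f : ZMod m → α) (hf : ∀ x, f (x + 1) = f x)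
    (x : ZMod m) : f x = f 0 := by
  have : NeZero m := ⟨by omega⟩
  have h : ∀ n : ℕ, f (n : ZMod m) = f 0 := by
    intro n
    induction n with
    | zero => simp
    | succ n ih => rw [Nat.cast_succ, hf, ih]
  rw [← ZMod.natCast_zmod_val x]
  exact h _

/-- connectivity in the list-free form -/
def Conn {X : Type} (G : SimpleGraph X) (U : Set X) : Prop :=
  ∀ a ∈ U, ∀ b ∈ U, Relation.ReflTransGen (RS G U) a b

lemma RS_mono {X : Type} {G : SimpleGraph X} {U U' : Set X} (h : U ⊆ U') {a b : X}
    (hab : Relation.ReflTransGen (RS G U) a b) : Relation.ReflTransGen (RS G U') a b := by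
  induction hab with
  | refl => exact .refl
  | tail _ h' ih => exact ih.tail ⟨h'.1, h h'.2.1, h h'.2.2⟩

theorem no_minor {X : Type} [Fintype X] {G : SimpleGraph X} {k : ℕ} (h : AlmostEmbeddable G k k k k) :
    ∃ A : Set X, A.ncard ≤ k ∧ ∀ (T : ℕ) (U : Fin T → Set X), (∀ i, Disjoint (U i) A) →
      (∀ i, (U i).Nonempty) → (∀ i, Conn G (U i)) → (∀ i j, i ≠ j → Disjoint (U i) (U j)) →
      (∀ i j, i ≠ j → ∃ a ∈ U i, ∃ b ∈ U j, G.Adj a b) → T ≤ TT k := by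
  obtain ⟨A, hA, s, hs, G₀, Gv, hsup, hdisj, S, hg, m, e, hadj, hm, hinj, hfac, hring, hvor⟩ := h
  refine ⟨A, hA, ?_⟩
  intro T U hUA hUne hUconn hUdis hUadj
  choose hv1 model hmc hme hmi hmk using hvor
  -- vertices and adjacency
  have hvert : ∀ x, x ∉ A → x ∈ G₀.verts ∨ ∃ i, x ∈ (Gv i).verts := by
    intro x hx
    have h1 : x ∈ (G₀ ⊔ ⨆ i, Gv i).verts := by
      rw [hsup]; simp [hx]
    simpa using h1
  have hadj' : ∀ x y, x ∉ A → y ∉ A → G.Adj x y → G₀.Adj x y ∨ ∃ i, (Gv i).Adj x y := by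
    intro x y hx hy hxy
    have h1 : (G₀ ⊔ ⨆ i, Gv i).Adj x y := by
      rw [hsup]; simp [hx, hy, hxy]
    simpa using h1
  let tr : X → Set G₀.verts := fun x => {w | (w : X) = x ∨ ∃ (i : Fin s) (hx : x ∈ (Gv i).verts)
    (t : ZMod (m i)), t ∈ model i ⟨x, hx⟩ ∧ w = e i t}
  have hrv : ∀ i t, ((e i t : G₀.verts) : X) ∈ (Gv i).verts := by
    intro i t
    have : ((e i t : G₀.verts) : X) ∈ (Gv i).verts ∩ G₀.verts := by
      rw [hv1 i]; exact ⟨e i t, ⟨t, rfl⟩, rfl⟩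
    exact this.1
  have huniq : ∀ i j x, x ∈ (Gv i).verts → x ∈ (Gv j).verts → i = j := by
    intro i j x hi hj
    by_contra hne
    exact Set.disjoint_left.1 (hdisj i j hne) hi hj
  -- structure of the trace for vortex vertices
  have htr : ∀ i x (hx : x ∈ (Gv i).verts) w, w ∈ tr x ↔ ∃ t ∈ model i ⟨x, hx⟩, w = e i t := by
    intro i x hx w
    constructor
    · rintro (h | ⟨j, hj, t, ht, rfl⟩)
      · subst h
        have : (w : X) ∈ (Gv i).verts ∩ G₀.verts := ⟨hx, w.2⟩
        rw [hv1 i] at this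
        obtain ⟨w', ⟨t, rfl⟩, hw'⟩ := this
        have hw : w = e i t := (Subtype.ext hw').symm
        exact ⟨t, hme i t _ hw', hw⟩
      · obtain rfl := huniq i j x hx hj
        exact ⟨t, ht, rfl⟩
    · rintro ⟨t, ht, rfl⟩
      exact Or.inr ⟨i, hx, t, ht, rfl⟩
  have htr0 : ∀ x, (∀ i, x ∉ (Gv i).verts) → ∀ w, w ∈ tr x ↔ (w : X) = x := by
    intro x hx w
    constructor
    · rintro (h | ⟨j, hj, _⟩)
      · exact h
      · exact absurd hj (hx j)
    · exact Or.inl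
  have htrne : ∀ x, x ∉ A → (tr x).Nonempty := by
    intro x hx
    rcases hvert x hx with h | ⟨i, h⟩
    · exact ⟨⟨x, h⟩, Or.inl rfl⟩
    · obtain ⟨t⟩ := (hmc i ⟨x, h⟩).nonempty
      exact ⟨e i t, (htr i x h _).2 ⟨t, t.2, rfl⟩⟩
  have htrconn : ∀ x, Conn G₀.coe (tr x) := by
    intro x a ha b hb
    by_cases h : ∃ i, x ∈ (Gv i).verts
    · obtain ⟨i, hx⟩ := h
      obtain ⟨t, ht, rfl⟩ := (htr i x hx a).1 ha
      obtain ⟨t', ht', rfl⟩ := (htr i x hx b).1 hb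
      obtain ⟨p⟩ := (hmc i ⟨x, hx⟩).preconnected ⟨t, ht⟩ ⟨t', ht'⟩
      have key : ∀ (u v : model i ⟨x, hx⟩) (p : ((ringGraph (m i)).induce (model i ⟨x, hx⟩)).Walk u v),
          Relation.ReflTransGen (RS G₀.coe (tr x)) (e i u) (e i v) := by
        intro u v p
        induction p with
        | nil => exact Relation.ReflTransGen.refl
        | @cons u w v huw p ih =>
          refine ih.head ⟨?_, (htr i x hx _).2 ⟨u, u.2, rfl⟩, (htr i x hx _).2 ⟨w, w.2, rfl⟩⟩
          have h1 : (ringGraph (m i)).Adj (u : ZMod (m i)) w := huw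
          unfold ringGraph at h1
          rw [SimpleGraph.fromRel_adj] at h1
          rcases h1.2 with h2 | h2
          · rw [h2]; exact hadj i _
          · rw [h2]; exact (hadj i _).symm
      exact key _ _ p
    · push Not at h
      have h1 := (htr0 x h a).1 ha
      have h2 := (htr0 x h b).1 hb
      have : a = b := Subtype.ext (h1.trans h2.symm)
      rw [this]
  have htouch : ∀ x y, x ∉ A → y ∉ A → G.Adj x y → ∃ a ∈ tr x, ∃ b ∈ tr y, a = b ∨ G₀.coe.Adj a b := by
    intro x y hx hy hxy
    rcases hadj' x y hx hy hxy with h | ⟨i, h⟩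
    · exact ⟨⟨x, h.fst_mem⟩, Or.inl rfl, ⟨y, h.snd_mem⟩, Or.inl rfl, Or.inr h⟩
    · have : (Gv i).coe.Adj ⟨x, h.fst_mem⟩ ⟨y, h.snd_mem⟩ := h
      obtain ⟨t, h1, h2⟩ := hmi i this
      exact ⟨e i t, (htr i x h.fst_mem _).2 ⟨t, h1, rfl⟩, e i t, (htr i y h.snd_mem _).2 ⟨t, h2, rfl⟩, Or.inl rfl⟩
  let D : Fin T → Set G₀.verts := fun i => ⋃ x ∈ U i, tr x
  have hsub : ∀ i x, x ∈ U i → tr x ⊆ D i := fun i x hx => Set.subset_biUnion_of_mem (u := fun x => tr x) hx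
  have hUA' : ∀ i x, x ∈ U i → x ∉ A := fun i x hx => Set.disjoint_left.1 (hUA i) hx
  have hDconn : ∀ i, Conn G₀.coe (D i) := by
    intro i a ha b hb
    obtain ⟨x, hx, ha⟩ := Set.mem_iUnion₂.1 ha
    obtain ⟨y, hy, hb⟩ := Set.mem_iUnion₂.1 hb
    have := hUconn i x hx y hy
    induction this generalizing b with
    | refl => exact RS_mono (hsub i x hx) (htrconn x a ha b hb)
    | @tail y z _ hyz ih =>
      obtain ⟨c, hc, c', hc', hcc⟩ := htouch y z (hUA' i y hyz.2.1) (hUA' i z hyz.2.2) hyz.1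
      have h1 := ih c (hsub i y hyz.2.1 hc) hyz.2.1 hc
      have h3 := RS_mono (hsub i z hyz.2.2) (htrconn z c' hc' b hb)
      rcases hcc with rfl | hcc
      · exact h1.trans h3
      · exact (h1.tail ⟨hcc, hsub i y hyz.2.1 hc, hsub i z hyz.2.2 hc'⟩).trans h3
  have hDtouch : ∀ i j, ∃ a ∈ D i, ∃ b ∈ D j, a = b ∨ G₀.coe.Adj a b := by
    intro i j
    by_cases hij : i = j
    · subst hij
      obtain ⟨x, hx⟩ := hUne i
      obtain ⟨w, hw⟩ := htrne x (hUA' i x hx)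
      exact ⟨w, hsub i x hx hw, w, hsub i x hx hw, Or.inl rfl⟩
    · obtain ⟨x, hx, y, hy, hxy⟩ := hUadj i j hij
      obtain ⟨a, ha, b, hb, hab⟩ := htouch x y (hUA' i x hx) (hUA' j y hy) hxy
      exact ⟨a, hsub i x hx ha, b, hsub j y hy hb, hab⟩
  let ring : G₀.verts → Option (Fin s) := fun w =>
    if h : ∃ i, w ∈ Set.range (e i) then some h.choose else none
  have hring1 : ∀ w r, ring w = some r → w ∈ Set.range (e r) := by
    intro w r h
    simp only [ring] at h
    by_cases hw : ∃ i, w ∈ Set.range (e i)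
    · rw [dif_pos hw] at h
      have := hw.choose_spec
      rw [Option.some.inj h] at this
      exact this
    · rw [dif_neg hw] at h
      exact absurd h (by simp)
  have hring0 : ∀ w, ring w = none → ∀ i t, w ≠ e i t := by
    rintro w h i t rfl
    simp only [ring] at h
    rw [dif_pos ⟨i, t, rfl⟩] at h
    exact absurd h (by simp)
  have hUinj : ∀ i j x, x ∈ U i → x ∈ U j → i = j := by
    intro i j x hi hj
    by_contra hne
    exact Set.disjoint_left.1 (hUdis i j hne) hi hj
  have hn : ∀ w, ring w = none → {j | w ∈ D j}.ncard ≤ 1 := by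
    intro w hw
    rw [Set.ncard_le_one (Set.toFinite _)]
    have : ∀ j, w ∈ D j → (w : X) ∈ U j := by
      intro j hj
      obtain ⟨x, hx, ha⟩ := Set.mem_iUnion₂.1 hj
      rcases ha with h | ⟨i, _, t, _, h⟩
      · rwa [h]
      · exact absurd h (hring0 w hw i t)
    intro i hi j hj
    exact hUinj i j _ (this i hi) (this j hj)
  have hk : ∀ w, {j | w ∈ D j}.ncard ≤ k + 1 := by
    intro w
    by_cases hw : ring w = none
    · exact (hn w hw).trans (by omega)
    · obtain ⟨r, hr⟩ := Option.ne_none_iff_exists'.1 hw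
      obtain ⟨t, rfl⟩ := hring1 w r hr
      have hx : ∀ j, e r t ∈ D j → ∃ v : (Gv r).verts, t ∈ model r v ∧ (v : X) ∈ U j := by
        intro j hj
        obtain ⟨x, hx, ha⟩ := Set.mem_iUnion₂.1 hj
        have hxr : x ∈ (Gv r).verts := by
          rcases ha with h | ⟨i, hi, t', _, h⟩
          · rw [← h]; exact hrv r t
          · have : i = r := huniq i r _ (by rw [h]; exact hrv i t') (hrv r t)
            rwa [← this]
        obtain ⟨t', ht', hte⟩ := (htr r x hxr _).1 ha
        have := hinj r hte
        subst this
        exact ⟨⟨x, hxr⟩, ht', hx⟩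
      have : Nonempty (Gv r).verts := ⟨⟨_, hrv r t⟩⟩
      choose! f hf1 hf2 using hx
      have := Set.ncard_le_ncard_of_injOn (s := {j | e r t ∈ D j}) (t := {v | t ∈ model r v}) f
        (fun j hj => hf1 j hj) (by
          intro i hi j hj hij
          have h1 := hf2 i hi
          rw [hij] at h1
          exact hUinj i j _ h1 (hf2 j hj)) (Set.toFinite _)
      have h2 := hmk r t
      omega
  have hr : ∀ u v r, ring u = some r → ring v = some r → ∃ p q : G₀.coe.Dart × Bool, p.1.fst = u ∧
      q.1.fst = v ∧ fc S p = fc S q := by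
    intro u v r hu hv
    obtain ⟨t, rfl⟩ := hring1 u r hu
    obtain ⟨t', rfl⟩ := hring1 v r hv
    obtain ⟨b, hb⟩ := hfac r
    have hc : ∀ x, fc S ((⟨(e r (x + 1), e r (x + 1 + 1)), hadj r (x + 1)⟩ : G₀.coe.Dart), b (x + 1)) =
        fc S ((⟨(e r x, e r (x + 1)), hadj r x⟩ : G₀.coe.Dart), b x) := by
      intro x
      rw [← hb x, fc_face]
    have := zmod_const (hm r) (fun x => fc S ((⟨(e r x, e r (x + 1)), hadj r x⟩ : G₀.coe.Dart), b x)) hc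
    exact ⟨_, _, rfl, rfl, (this t).trans (this t').symm⟩
  have main := topo_main S (D := D) (ring := ring) hg (by omega) hk hn hr hDconn hDtouch
  rw [Fintype.card_fin, Fintype.card_fin] at main
  refine main.trans ?_
  unfold TT
  have h1 : KK (k + 1) s ≤ KK (k + 1) k := by
    unfold KK
    have := cc_mono (k + 1) hs
    omega
  have := Nat.mul_le_mul_left (3 + 2 * k) h1
  omega

end
end Topo


namespace Topo

section
open scoped Classical

/-- no induced path of order `l` -/
def NoIP {V : Type} (G : SimpleGraph V) (l : ℕ) : Prop := IsEmpty (pathGraph l ↪g G)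

lemma geo {V : Type} {G : SimpleGraph V} {a b : V} (h : G.Reachable a b) {l : ℕ}
    (hl : l ≤ G.dist a b + 1) : ∃ f : pathGraph l ↪g G, ∀ i, G.Reachable a (f i) := by
  obtain ⟨p, hp⟩ := h.exists_walk_length_eq_dist
  have hd : ∀ i, i ≤ p.length → G.dist a (p.getVert i) = i := by
    intro i hi
    have h1 : G.dist a (p.getVert i) ≤ i := by
      have := SimpleGraph.dist_le (p.take i)
      rw [SimpleGraph.Walk.take_length] at this
      omega
    have h2 : G.dist (p.getVert i) b ≤ p.length - i := by
      have := SimpleGraph.dist_le (p.drop i)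
      rw [SimpleGraph.Walk.drop_length] at this
      omega
    have h3 : G.dist a b ≤ G.dist a (p.getVert i) + G.dist (p.getVert i) b := by
      have hr : G.Reachable a (p.getVert i) := ⟨p.take i⟩
      have hr' : G.Reachable (p.getVert i) b := ⟨p.drop i⟩
      obtain ⟨q, hq⟩ := hr.exists_walk_length_eq_dist
      obtain ⟨q', hq'⟩ := hr'.exists_walk_length_eq_dist
      have := SimpleGraph.dist_le (q.append q')
      rw [SimpleGraph.Walk.length_append] at this
      omega
    omega
  have hadj : ∀ i j, i ≤ p.length → j ≤ p.length → G.Adj (p.getVert i) (p.getVert j) → j ≤ i + 1 := by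
    intro i j hi hj hij
    have hr : G.Reachable a (p.getVert i) := ⟨p.take i⟩
    obtain ⟨q, hq⟩ := hr.exists_walk_length_eq_dist
    have := SimpleGraph.dist_le (q.concat hij)
    rw [SimpleGraph.Walk.length_concat, hq, hd i hi, hd j hj] at this
    exact this
  refine ⟨⟨⟨fun i => p.getVert i, ?_⟩, ?_⟩, ?_⟩
  · intro i j hij
    have h1 := hd i (by omega)
    have h2 := hd j (by omega)
    simp only at hij
    rw [hij] at h1
    exact Fin.ext (by omega)
  · intro i j
    change G.Adj (p.getVert i) (p.getVert j) ↔ _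
    rw [pathGraph_adj]
    constructor
    · intro h
      have h1 := hadj i j (by omega) (by omega) h
      have h2 := hadj j i (by omega) (by omega) h.symm
      have h3 : (i : ℕ) ≠ j := by
        intro hh
        rw [hh] at h
        exact G.irrefl h
      omega
    · rintro (h | h)
      · rw [← h]
        exact p.adj_getVert_succ (by omega)
      · rw [← h]
        exact (p.adj_getVert_succ (by omega)).symm
  · intro i
    exact ⟨p.take i⟩

lemma level {V : Type} {G : SimpleGraph V} {W : Set V} {a b : V} {l : ℕ}
    (ha : a ∈ W) (h : Relation.ReflTransGen (RS G W) a b) (idx : V → ℕ)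
    (hs : ∀ x ∈ W, ∀ y ∈ W, G.Adj x y → idx y ≤ idx x + 1) (h0 : idx a = 0) (hl : l ≤ idx b + 1) :
    ¬ NoIP G l := by
  let H : SimpleGraph V := ⟨RS G W, ⟨fun x y h => ⟨h.1.symm, h.2.2, h.2.1⟩⟩, ⟨fun x h => G.irrefl h.1⟩⟩
  have hw : ∀ x y, ∀ p : H.Walk x y, idx y ≤ idx x + p.length := by
    intro x y p
    induction p with
    | nil => simp
    | cons h p ih =>
      have := hs _ h.2.1 _ h.2.2 h.1
      simp only [SimpleGraph.Walk.length_cons]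
      omega
  have hr : H.Reachable a b := by
    clear hl
    induction h with
    | refl => exact SimpleGraph.Reachable.refl _
    | tail _ h' ih =>
      have h' : H.Adj _ _ := h'
      exact ih.trans h'.reachable
  have hW : ∀ x, H.Reachable a x → x ∈ W := by
    rintro x ⟨p⟩
    by_cases hx : a = x
    · rw [← hx]; exact ha
    · obtain ⟨y, h1, p', _⟩ := SimpleGraph.Walk.exists_eq_cons_of_ne (fun h => hx h.symm) p.reverse
      exact h1.2.1
  obtain ⟨p, hp⟩ := hr.exists_walk_length_eq_dist
  have := hw _ _ p
  obtain ⟨f, hf⟩ := geo hr (l := l) (by omega)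
  intro hno
  refine hno.false ⟨f.toEmbedding, ?_⟩
  intro i j
  rw [← f.map_rel_iff]
  exact ⟨fun h => ⟨h, hW _ (hf i), hW _ (hf j)⟩, fun h => h.1⟩

lemma Conn_single {V : Type} (G : SimpleGraph V) (x : V) : Conn G {x} := by
  rintro a rfl b rfl
  exact .refl

lemma RS_symm' {V : Type} {G : SimpleGraph V} {U : Set V} {a b : V}
    (h : Relation.ReflTransGen (RS G U) a b) : Relation.ReflTransGen (RS G U) b a := by
  induction h with
  | refl => exact .refl
  | tail _ h ih => exact Relation.ReflTransGen.head ⟨h.1.symm, h.2.2, h.2.1⟩ ih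

lemma Conn_union {V : Type} {G : SimpleGraph V} {U U' : Set V} (h : Conn G U) (h' : Conn G U')
    {x y : V} (hx : x ∈ U) (hy : y ∈ U') (hxy : x = y ∨ G.Adj x y) : Conn G (U ∪ U') := by
  have key : ∀ a ∈ U ∪ U', Relation.ReflTransGen (RS G (U ∪ U')) x a := by
    rintro a (ha | ha)
    · exact RS_mono Set.subset_union_left (h x hx a ha)
    · have h2 := RS_mono (U' := U ∪ U') Set.subset_union_right (h' y hy a ha)
      rcases hxy with rfl | hxy
      · exact h2
      · exact Relation.ReflTransGen.head ⟨hxy, Or.inl hx, Or.inr hy⟩ h2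
  intro a ha b hb
  exact (RS_symm' (key a ha)).trans (key b hb)

/-- lift of a connected set in a quotient graph -/
lemma reach_lift {V J : Type} {G : SimpleGraph V} {C : SimpleGraph J} (S : J → Set V) {U : Set J}
    (hS : ∀ j ∈ U, Conn G (S j))
    (hC : ∀ i ∈ U, ∀ j ∈ U, C.Adj i j → ∃ x ∈ S i, ∃ y ∈ S j, G.Adj x y)
    {i j : J} (hi : i ∈ U) (h : Relation.ReflTransGen (RS C U) i j) :
    ∀ x ∈ S i, ∀ y ∈ S j, Relation.ReflTransGen (RS G {x | ∃ j ∈ U, x ∈ S j}) x y := by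
  induction h with
  | refl => exact fun x hx y hy => RS_mono (fun z hz => by exact ⟨i, hi, hz⟩) (hS i hi x hx y hy)
  | tail _ h' ih =>
    intro x hx y hy
    obtain ⟨x', hx', y', hy', h1⟩ := hC _ h'.2.1 _ h'.2.2 h'.1
    have h2 := ih x hx x' hx'
    have h3 : Relation.ReflTransGen (RS G {x | ∃ j ∈ U, x ∈ S j}) y' y :=
      RS_mono (fun z hz => by exact ⟨_, h'.2.2, hz⟩) (hS _ h'.2.2 y' hy' y hy)
    exact (h2.tail ⟨h1, ⟨_, h'.2.1, hx'⟩, ⟨_, h'.2.2, hy'⟩⟩).trans h3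

lemma Conn_lift {V J : Type} {G : SimpleGraph V} {C : SimpleGraph J} (S : J → Set V) {U : Set J}
    (hS : ∀ j ∈ U, Conn G (S j))
    (hC : ∀ i ∈ U, ∀ j ∈ U, C.Adj i j → ∃ x ∈ S i, ∃ y ∈ S j, G.Adj x y) (hU : Conn C U) :
    Conn G {x | ∃ j ∈ U, x ∈ S j} := by
  rintro a ⟨i, hi, ha⟩ b ⟨j, hj, hb⟩
  exact reach_lift S hS hC hi (hU i hi j hj) a ha b hb

lemma reach_seq {V : Type} {G : SimpleGraph V} {W : Set V} (x : ℕ → V) {n : ℕ}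
    (h : ∀ i, i < n → Relation.ReflTransGen (RS G W) (x i) (x (i + 1))) :
    Relation.ReflTransGen (RS G W) (x 0) (x n) := by
  induction n with
  | zero => exact .refl
  | succ n ih => exact (ih fun i hi => h i (by omega)).trans (h n (by omega))

/-- blob lemma -/
lemma blob {V : Type} {G : SimpleGraph V} (W : ℕ → Set V) (l : ℕ) {a b : V}
    (hr : Relation.ReflTransGen (RS G {x | ∃ i < l, x ∈ W i}) a b)
    (hl : 0 < l) (ha : a ∈ W 0) (hb : ∀ i < l, b ∈ W i → l ≤ i + 1) (hb' : ∃ i < l, b ∈ W i)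
    (hs : ∀ i < l, ∀ j < l, ∀ x ∈ W i, ∀ y ∈ W j, G.Adj x y → j ≤ i + 1) : ¬ NoIP G l := by
  let idx : V → ℕ := fun x => if h : ∃ i, i < l ∧ x ∈ W i then Nat.find h else 0
  have hidx : ∀ x, (∃ i < l, x ∈ W i) → idx x < l ∧ x ∈ W (idx x) := by
    intro x hx
    simp only [idx, dif_pos hx]
    exact Nat.find_spec hx
  refine level (W := {x | ∃ i < l, x ∈ W i}) (a := a) (b := b) ⟨0, hl, ha⟩ hr idx ?_ ?_ ?_
  · intro x hx y hy hxy
    exact hs _ (hidx x hx).1 _ (hidx y hy).1 x (hidx x hx).2 y (hidx y hy).2 hxy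
  · have hx : ∃ i, i < l ∧ a ∈ W i := ⟨0, hl, ha⟩
    simp only [idx, dif_pos hx]
    simp [hl, ha]
  · exact hb _ (hidx b hb').1 (hidx b hb').2

lemma NoIP_zero {V : Type} {G : SimpleGraph V} {l : ℕ} (h : NoIP G l) : 0 < l := by
  rcases Nat.eq_zero_or_pos l with rfl | h'
  · exact (h.false (⟨⟨Fin.elim0, fun i => i.elim0⟩, fun {i} => i.elim0⟩ : pathGraph 0 ↪g G)).elim
  · exact h'

lemma NoIP_one {V : Type} {G : SimpleGraph V} (v : V) {l : ℕ} (h : NoIP G l) : 2 ≤ l := by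
  have := NoIP_zero h
  by_contra hl
  obtain rfl : l = 1 := by omega
  refine h.false ⟨⟨fun _ => v, fun i j _ => Subsingleton.elim _ _⟩, ?_⟩
  intro i j
  rw [Subsingleton.elim i j]
  simp

/-- contraction does not create long induced paths -/
lemma NoIP_contract {V J : Type} {G : SimpleGraph V} {C : SimpleGraph J} (S : J → Set V) {l : ℕ}
    (hne : ∀ j, (∃ i, C.Adj j i) → (S j).Nonempty)
    (hS : ∀ j, (∃ i, C.Adj j i) → Conn G (S j))
    (hC : ∀ i j, C.Adj i j → ∃ x ∈ S i, ∃ y ∈ S j, G.Adj x y)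
    (hC' : ∀ i j, (∃ i', C.Adj i i') → (∃ i', C.Adj j i') → i ≠ j → ∀ x ∈ S i, ∀ y ∈ S j, G.Adj x y → C.Adj i j)
    (hd : ∀ i j, (∃ i', C.Adj i i') → (∃ i', C.Adj j i') → i ≠ j → Disjoint (S i) (S j))
    (hV : Nonempty V)
    (h : NoIP G l) : NoIP C l := by
  have hl := NoIP_one hV.some h
  refine ⟨fun f => ?_⟩
  let g : ℕ → J := fun i => if h : i < l then f ⟨i, h⟩ else f ⟨0, by omega⟩
  have hg : ∀ i (h : i < l), g i = f ⟨i, h⟩ := fun i h => dif_pos h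
  have hadj : ∀ i j, i < l → j < l → (C.Adj (g i) (g j) ↔ i + 1 = j ∨ j + 1 = i) := by
    intro i j hi hj
    rw [hg i hi, hg j hj, f.map_rel_iff, pathGraph_adj]
  have hinj : ∀ i j, i < l → j < l → g i = g j → i = j := by
    intro i j hi hj hij
    rw [hg i hi, hg j hj] at hij
    simpa using f.injective hij
  have hex : ∀ i, i < l → ∃ j, C.Adj (g i) j := by
    intro i hi
    by_cases h0 : i = 0
    · exact ⟨g (i + 1), (hadj _ _ hi (by omega)).2 (Or.inl rfl)⟩
    · exact ⟨g (i - 1), (hadj _ _ hi (by omega)).2 (Or.inr (by omega))⟩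
  obtain ⟨a, ha⟩ := hne _ (hex 0 (by omega))
  obtain ⟨b, hb⟩ := hne _ (hex (l - 1) (by omega))
  have hun : ∀ i, i < l → ∀ j, j < l → ∀ x, x ∈ S (g i) → x ∈ S (g j) → i = j := by
    intro i hi j hj x hx hx'
    by_contra hij
    exact Set.disjoint_left.1 (hd _ _ (hex i hi) (hex j hj) (fun h => hij (hinj _ _ hi hj h))) hx hx'
  have hr0 : Relation.ReflTransGen (RS C {x | ∃ i < l, x = g i}) (g 0) (g (l - 1)) := by
    apply reach_seq
    intro i hi
    exact .single ⟨(hadj _ _ (by omega) (by omega)).2 (Or.inl rfl), ⟨_, by omega, rfl⟩, ⟨_, by omega, rfl⟩⟩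
  have hr := reach_lift S (U := {x | ∃ i < l, x = g i}) (by rintro _ ⟨i, hi, rfl⟩; exact hS _ (hex i hi))
    (fun i _ j _ => hC i j) ⟨0, by omega, rfl⟩ hr0 a ha b hb
  have hset : {x | ∃ j ∈ {x | ∃ i < l, x = g i}, x ∈ S j} = {x | ∃ i < l, x ∈ S (g i)} := by
    ext x
    constructor
    · rintro ⟨_, ⟨i, hi, rfl⟩, hx⟩
      exact ⟨i, hi, hx⟩
    · rintro ⟨i, hi, hx⟩
      exact ⟨_, ⟨i, hi, rfl⟩, hx⟩
  rw [hset] at hr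
  refine blob (fun i => S (g i)) l hr (by omega) ha ?_ ⟨l - 1, by omega, hb⟩ ?_ h
  · intro i hi hbi
    have := hun i hi (l - 1) (by omega) b hbi hb
    omega
  · intro i hi j hj x hx y hy hxy
    by_cases hij : i = j
    · omega
    · have := hC' _ _ (hex i hi) (hex j hj) (fun h => hij (hinj _ _ hi hj h)) x hx y hy hxy
      rw [hadj _ _ hi hj] at this
      omega

/-- torso of a set of vertices -/
def tor {V : Type} (G : SimpleGraph V) (X : Set V) : SimpleGraph V where
  Adj u v := u ≠ v ∧ u ∈ X ∧ v ∈ X ∧ (G.Adj u v ∨ ∃ K : Set V, Disjoint K X ∧ Conn G K ∧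
    (∃ p ∈ K, G.Adj u p) ∧ ∃ q ∈ K, G.Adj v q)
  symm := ⟨fun u v h => ⟨h.1.symm, h.2.2.1, h.2.1, h.2.2.2.elim (fun h => Or.inl h.symm)
    (fun ⟨K, h1, h2, h3, h4⟩ => Or.inr ⟨K, h1, h2, h4, h3⟩)⟩⟩
  loopless := ⟨fun u h => h.1 rfl⟩

lemma NoIP_tor {V : Type} {G : SimpleGraph V} (X : Set V) {l : ℕ}
    (h : NoIP G l) : NoIP (tor G X) l := by
  refine ⟨fun f => ?_⟩
  have hl0 := NoIP_zero h
  have hl := NoIP_one (f ⟨0, by omega⟩) h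
  let g : ℕ → V := fun i => if h : i < l then f ⟨i, h⟩ else f ⟨0, by omega⟩
  have hg : ∀ i (h : i < l), g i = f ⟨i, h⟩ := fun i h => dif_pos h
  have hadj : ∀ i j, i < l → j < l → ((tor G X).Adj (g i) (g j) ↔ i + 1 = j ∨ j + 1 = i) := by
    intro i j hi hj
    rw [hg i hi, hg j hj, f.map_rel_iff, pathGraph_adj]
  have hinj : ∀ i j, i < l → j < l → g i = g j → i = j := by
    intro i j hi hj hij
    rw [hg i hi, hg j hj] at hij
    simpa using f.injective hij
  have hex : ∀ i, i < l → ∃ j, (tor G X).Adj (g i) j := by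
    intro i hi
    by_cases h0 : i = 0
    · exact ⟨g (i + 1), (hadj _ _ hi (by omega)).2 (Or.inl rfl)⟩
    · exact ⟨g (i - 1), (hadj _ _ hi (by omega)).2 (Or.inr (by omega))⟩
  have hX : ∀ i, i < l → g i ∈ X := fun i hi => (hex i hi).choose_spec.2.1
  have hK : ∀ i, i + 1 < l → ∃ K : Set V, Disjoint K X ∧ Conn G K ∧ (∀ x ∈ K, ∃ y ∈ K, G.Adj (g i) y) ∧
      (∀ x ∈ K, ∃ y ∈ K, G.Adj (g (i + 1)) y) ∧
      Relation.ReflTransGen (RS G (K ∪ {g i, g (i + 1)})) (g i) (g (i + 1)) := by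
    intro i hi
    have h1 := (hadj i (i + 1) (by omega) hi).2 (Or.inl rfl)
    rcases h1.2.2.2 with h2 | ⟨K, h2, h3, ⟨p, hp, h4⟩, q, hq, h5⟩
    · refine ⟨∅, by simp, fun x hx => absurd hx (by simp), by simp, by simp, ?_⟩
      exact .single ⟨h2, by simp, by simp⟩
    · refine ⟨K, h2, h3, fun _ _ => ⟨p, hp, h4⟩, fun _ _ => ⟨q, hq, h5⟩, ?_⟩
      have h6 := RS_mono (U' := K ∪ {g i, g (i + 1)}) Set.subset_union_left (h3 p hp q hq)
      exact (Relation.ReflTransGen.head ⟨h4, by simp, Or.inl hp⟩ h6).tail ⟨h5.symm, Or.inl hq, by simp⟩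
  choose! K hKX hKc hK1 hK2 hKr using hK
  let W : ℕ → Set V := fun i => {x | x = g i ∨ (i + 1 < l ∧ x ∈ K i)}
  have hr : Relation.ReflTransGen (RS G {x | ∃ i < l, x ∈ W i}) (g 0) (g (l - 1)) := by
    apply reach_seq
    intro i hi
    refine RS_mono ?_ (hKr i (by omega))
    rintro x (hx | rfl | rfl)
    · exact ⟨i, by omega, Or.inr ⟨by omega, hx⟩⟩
    · exact ⟨i, by omega, Or.inl rfl⟩
    · exact ⟨i + 1, by omega, Or.inl rfl⟩
  refine blob W l hr (by omega) (Or.inl rfl) ?_ ⟨l - 1, by omega, Or.inl rfl⟩ ?_ h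
  · rintro i hi (hbi | ⟨hi', hbi⟩)
    · have := hinj _ _ (by omega) hi hbi
      omega
    · exact absurd (hX (l - 1) (by omega)) (Set.disjoint_left.1 (hKX i hi') hbi)
  · intro i hi j hj x hx y hy hxy
    by_contra hij
    have mk : ∀ i' j', i' + 2 ≤ j' → j' < l → ¬ (G.Adj (g i') (g j') ∨ ∃ K : Set V, Disjoint K X ∧ Conn G K ∧
        (∃ p ∈ K, G.Adj (g i') p) ∧ ∃ q ∈ K, G.Adj (g j') q) := by
      intro i' j' h1 h2 h3
      have : (tor G X).Adj (g i') (g j') := ⟨fun h => by have := hinj _ _ (by omega) h2 h; omega,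
        hX _ (by omega), hX _ h2, h3⟩
      rw [hadj _ _ (by omega) h2] at this
      omega
    rcases hx with rfl | ⟨hi', hx⟩
    · rcases hy with rfl | ⟨hj', hy⟩
      · exact mk i j (by omega) hj (Or.inl hxy)
      · exact mk i (j + 1) (by omega) hj' (Or.inr ⟨K j, hKX j hj', hKc j hj', ⟨y, hy, hxy⟩, hK2 j hj' y hy⟩)
    · rcases hy with rfl | ⟨hj', hy⟩
      · exact mk i j (by omega) hj (Or.inr ⟨K i, hKX i hi', hKc i hi', hK1 i hi' x hx, ⟨x, hx, hxy.symm⟩⟩)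
      · obtain ⟨p, hp, hp'⟩ := hK1 i hi' x hx
        obtain ⟨q, hq, hq'⟩ := hK2 j hj' y hy
        exact mk i (j + 1) (by omega) hj' (Or.inr ⟨K i ∪ K j, Set.disjoint_union_left.2 ⟨hKX i hi', hKX j hj'⟩,
          Conn_union (hKc i hi') (hKc j hj') hx hy (Or.inr hxy), ⟨p, Or.inl hp, hp'⟩, ⟨q, Or.inr hq, hq'⟩⟩)

end
end Topo


namespace Topo

section
open scoped Classical

/-- a path given as a list of vertices -/
def PL {V : Type} (G : SimpleGraph V) (l : List V) : Prop := l.Nodup ∧ l.IsChain G.Adj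

lemma PL.segm {V : Type} {G : SimpleGraph V} {l l' : List V} (h : PL G l) (h' : l' <:+: l) : PL G l' :=
  ⟨h.1.sublist h'.sublist, by
    obtain ⟨a, b, e⟩ := h'
    have h2 := h.2
    rw [← e] at h2
    exact h2.left_of_append.right_of_append⟩

lemma Conn_chain {V : Type} {G : SimpleGraph V} {l : List V} (h : l.IsChain G.Adj) :
    Conn G {x | x ∈ l} := by
  induction l with
  | nil => intro a ha; simp at ha
  | cons x l ih =>
    rcases l with _ | ⟨y, l⟩
    · have : {z | z ∈ [x]} = {x} := by ext; simp
      rw [this]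
      exact Conn_single G x
    · have h1 : {z | z ∈ x :: y :: l} = {x} ∪ {z | z ∈ y :: l} := by
        ext; simp
      rw [h1]
      rw [List.isChain_cons_cons] at h
      exact Conn_union (Conn_single G x) (ih h.2) (x := x) (y := y) rfl (by simp) (Or.inr h.1)

lemma PL_tor_aux {V : Type} {G : SimpleGraph V} (X : Set V) (l : List V) :
    ∀ u ∈ X, u ∉ l → PL G l → (∀ h ∈ l.head?, (G.Adj u h ∨ ∃ K : Set V, Disjoint K X ∧ Conn G K ∧
      (∃ p ∈ K, G.Adj u p) ∧ ∃ q ∈ K, G.Adj h q)) →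
    (u :: l.filter (fun x => decide (x ∈ X))).IsChain (tor G X).Adj := by
  induction l with
  | nil => intros; simp
  | cons h t ih =>
    intro u hu hul hP hh
    have hP' : PL G t := ⟨(List.nodup_cons.1 hP.1).2, hP.2.tail⟩
    have hht : h ∉ t := (List.nodup_cons.1 hP.1).1
    have h1 := hh h (by simp)
    have hadj : ∀ z ∈ t.head?, G.Adj h z := by
      intro z hz
      rcases t with _ | ⟨y, t⟩
      · simp at hz
      · simp at hz
        subst hz
        exact (List.isChain_cons_cons.1 hP.2).1
    simp only [List.mem_cons, not_or] at hul
    by_cases hX : h ∈ X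
    · rw [List.filter_cons_of_pos (by simpa using hX), List.isChain_cons_cons]
      exact ⟨⟨hul.1, hu, hX, h1⟩, ih h hX hht hP' fun z hz => Or.inl (hadj z hz)⟩
    · rw [List.filter_cons_of_neg (by simpa using hX)]
      refine ih u hu hul.2 hP' fun z hz => Or.inr ?_
      rcases h1 with h1 | ⟨K, hK, hKc, ⟨p, hp, hup⟩, q, hq, hhq⟩
      · exact ⟨{h}, by simpa using hX, Conn_single _ _, ⟨h, rfl, h1⟩, ⟨h, rfl, (hadj z hz).symm⟩⟩
      · exact ⟨K ∪ {h}, Set.disjoint_union_left.2 ⟨hK, by simpa using hX⟩,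
          Conn_union hKc (Conn_single G h) hq rfl (Or.inr hhq.symm), ⟨p, Or.inl hp, hup⟩,
          ⟨h, Or.inr rfl, (hadj z hz).symm⟩⟩

lemma PL_tor {V : Type} {G : SimpleGraph V} (X : Set V) {l : List V} (h : PL G l) :
    PL (tor G X) (l.filter (fun x => decide (x ∈ X))) := by
  refine ⟨h.1.filter _, ?_⟩
  induction l with
  | nil => simp
  | cons x t ih =>
    have hP' : PL G t := ⟨(List.nodup_cons.1 h.1).2, h.2.tail⟩
    by_cases hX : x ∈ X
    · rw [List.filter_cons_of_pos (by simpa using hX)]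
      refine PL_tor_aux X t x hX (List.nodup_cons.1 h.1).1 hP' ?_
      intro z hz
      rcases t with _ | ⟨y, t⟩
      · simp at hz
      · simp at hz
        subst hz
        exact Or.inl (List.isChain_cons_cons.1 h.2).1
    · rw [List.filter_cons_of_neg (by simpa using hX)]
      exact ih hP'

lemma deg_lemma {V : Type} {G : SimpleGraph V} {l : List V} {m D : ℕ} (h : PL G l) (hno : NoIP G m)
    (hD : ∀ v ∈ l, (l.toFinset.filter (fun w => G.Adj v w)).card ≤ D) : l.length ≤ (D + 1) ^ m := by
  rcases l with _ | ⟨a, t⟩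
  · simp
  set l := a :: t with hl
  let B : ℕ → Finset V := fun r => Nat.rec {a} (fun _ S => S ∪ S.biUnion fun x => l.toFinset.filter (fun w => G.Adj x w)) r
  have hB0 : B 0 = {a} := rfl
  have hB1 : ∀ r, B (r + 1) = B r ∪ (B r).biUnion fun x => l.toFinset.filter (fun w => G.Adj x w) := fun r => rfl
  have hBl : ∀ r, ∀ x ∈ B r, x ∈ l := by
    intro r
    induction r with
    | zero => intro x hx; simp [hB0] at hx; simp [hl, hx]
    | succ r ih =>
      intro x hx
      rw [hB1, Finset.mem_union] at hx
      rcases hx with hx | hx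
      · exact ih x hx
      · simp at hx
        obtain ⟨_, _, h, _⟩ := hx
        exact h
  have hBc : ∀ r, (B r).card ≤ (D + 1) ^ r := by
    intro r
    induction r with
    | zero => simp [hB0]
    | succ r ih =>
      rw [hB1]
      have h1 := Finset.card_union_le (B r) ((B r).biUnion fun x => l.toFinset.filter (fun w => G.Adj x w))
      have h2 : ((B r).biUnion fun x => l.toFinset.filter (fun w => G.Adj x w)).card ≤ (B r).card * D :=
        Finset.card_biUnion_le_card_mul _ _ _ fun x hx => hD x (hBl r x hx)
      calc _ ≤ (B r).card + (B r).card * D := h1.trans (by omega)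
        _ = (B r).card * (D + 1) := by ring
        _ ≤ (D + 1) ^ r * (D + 1) := Nat.mul_le_mul_right _ ih
        _ = _ := by ring
  have hmono : ∀ r s, r ≤ s → B r ⊆ B s := by
    intro r s hrs
    induction hrs with
    | refl => exact Finset.Subset.refl _
    | step _ ih => exact ih.trans (by rw [hB1]; exact Finset.subset_union_left)
  have hstep : ∀ r, ∀ x ∈ B r, ∀ y ∈ l, G.Adj x y → y ∈ B (r + 1) := by
    intro r x hx y hy hxy
    rw [hB1, Finset.mem_union]
    right
    simp only [Finset.mem_biUnion, Finset.mem_filter, List.mem_toFinset]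
    exact ⟨x, hx, hy, hxy⟩
  have hreach : ∀ b ∈ l, Relation.ReflTransGen (RS G {x | x ∈ l}) a b :=
    fun b hb => Conn_chain h.2 a (by simp [hl]) b hb
  have hex : ∀ b ∈ l, ∃ r, b ∈ B r := by
    intro b hb
    have := hreach b hb
    clear hb
    induction this with
    | refl => exact ⟨0, by simp [hB0]⟩
    | tail _ h' ih =>
      obtain ⟨r, hr⟩ := ih
      exact ⟨r + 1, hstep r _ hr _ h'.2.2 h'.1⟩
  have hall : ∀ b ∈ l, b ∈ B m := by
    intro b hb
    by_contra hbm
    let idx : V → ℕ := fun x => sInf {r | x ∈ B r}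
    have hidx : ∀ x, (hx : x ∈ l) → x ∈ B (idx x) := by
      intro x hx
      exact Nat.sInf_mem (s := {r | x ∈ B r}) (hex x hx)
    have hidx' : ∀ x r, x ∈ B r → idx x ≤ r := by
      intro x r hx
      exact Nat.sInf_le (s := {r | x ∈ B r}) hx
    refine level (W := {x | x ∈ l}) (a := a) (b := b) (by simp [hl]) (hreach b hb) idx ?_ ?_ ?_ hno
    · intro x hx y hy hxy
      exact hidx' _ _ (hstep _ x (hidx x hx) y hy hxy)
    · have := hidx' a 0 (by simp [hB0])
      omega
    · by_contra hlt
      exact hbm (hmono _ _ (by omega) (hidx b hb))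
  calc l.length = l.toFinset.card := (List.toFinset_card_of_nodup h.1).symm
    _ ≤ (B m).card := Finset.card_le_card fun x hx => hall x (List.mem_toFinset.1 hx)
    _ ≤ _ := hBc m

/-- splitting a list by a set -/
lemma split_lemma {V : Type} (μ : List V → ℕ) (h1 : ∀ v, μ [v] ≤ 1)
    (h2 : ∀ l l', μ (l ++ l') ≤ μ l + μ l') (Y : Set V) (B : ℕ) (y : ℕ) :
    ∀ l : List V, l.countP (fun x => decide (x ∈ Y)) ≤ y →
      (∀ l', l' <:+: l → (∀ x ∈ l', x ∉ Y) → μ l' ≤ B) → μ l ≤ (y + 1) * B + y := by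
  induction y with
  | zero =>
    intro l hl hB
    have := hB l List.infix_rfl (by
      have := List.countP_eq_zero.1 (Nat.le_zero.1 hl)
      simpa using this)
    omega
  | succ y ih =>
    intro l hl hB
    by_cases hY : ∀ x ∈ l, x ∉ Y
    · have := hB l List.infix_rfl hY
      nlinarith
    · have h3 : ∃ l1 v l2, l = l1 ++ v :: l2 ∧ v ∈ Y ∧ ∀ x ∈ l1, x ∉ Y := by
        clear hl hB
        induction l with
        | nil => simp at hY
        | cons a t iht =>
          by_cases ha : a ∈ Y
          · exact ⟨[], a, t, rfl, ha, by simp⟩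
          · obtain ⟨l1, v, l2, h, hv, hh⟩ := iht (by
              intro hh
              apply hY
              simp only [List.mem_cons, forall_eq_or_imp]
              exact ⟨ha, hh⟩)
            refine ⟨a :: l1, v, l2, by simp [h], hv, ?_⟩
            simp only [List.mem_cons, forall_eq_or_imp]
            exact ⟨ha, hh⟩
      obtain ⟨l1, v, l2, rfl, hv, hl1⟩ := h3
      have e1 := hB l1 ⟨[], v :: l2, by simp⟩ hl1
      have e2 := ih l2 (by
        rw [List.countP_append, List.countP_cons_of_pos (by simpa using hv)] at hl
        omega) (fun l' hl' => hB l' (hl'.trans ⟨l1 ++ [v], [], by simp⟩))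
      have e3 := h2 l1 ([v] ++ l2)
      have e4 := h2 [v] l2
      have e5 := h1 v
      simp only [List.singleton_append] at e3 e4
      have : (y + 1 + 1) * B = B + (y + 1) * B := by ring
      omega

/-- clique minor with branch sets inside `W` -/
def Mn {V : Type} (G : SimpleGraph V) (W : Set V) (a : ℕ) : Prop :=
  ∃ U : Fin a → Set V, (∀ i, U i ⊆ W) ∧ (∀ i, (U i).Nonempty) ∧ (∀ i, Conn G (U i)) ∧
    (∀ i j, i ≠ j → Disjoint (U i) (U j)) ∧ ∀ i j, i ≠ j → ∃ a ∈ U i, ∃ b ∈ U j, G.Adj a b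

lemma segs {V : Type} (P : V → Prop) (l : List V) : ∃ (L : List (List V)) (r : List V), l = L.flatten ++ r ∧
    L.length = l.countP (fun x => decide (P x)) ∧ ∀ s ∈ L, ∃ x ∈ s, P x := by
  induction l with
  | nil => exact ⟨[], [], by simp⟩
  | cons x l ih =>
    obtain ⟨L, r, h1, h2, h3⟩ := ih
    by_cases hx : P x
    · refine ⟨[x] :: L, r, by simp [h1], ?_, ?_⟩
      · rw [List.countP_cons_of_pos (by simpa using hx), List.length_cons, h2]
      · intro s hs
        rcases List.mem_cons.1 hs with rfl | hs
        · exact ⟨x, by simp, hx⟩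
        · exact h3 s hs
    · rcases L with _ | ⟨s, L⟩
      · refine ⟨[], x :: r, by simp [h1], ?_, by simp⟩
        rw [List.countP_cons_of_neg (by simpa using hx), ← h2]
      · refine ⟨(x :: s) :: L, r, by simp [h1], ?_, ?_⟩
        · rw [List.countP_cons_of_neg (by simpa using hx), ← h2]
          simp
        · intro s' hs'
          rcases List.mem_cons.1 hs' with rfl | hs'
          · obtain ⟨z, hz, hP⟩ := h3 s (by simp)
            exact ⟨z, by simp [hz], hP⟩
          · exact h3 s' (by simp [hs'])

def FF (m : ℕ) : ℕ → ℕ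
  | 0 => 0
  | a + 1 => (2 * FF m a + 3) ^ m

theorem minor_ext (m a : ℕ) : ∀ {V : Type} (G : SimpleGraph V) (l : List V), PL G l → NoIP G m →
    FF m a < l.length → Mn G {x | x ∈ l} a := by
  induction a with
  | zero =>
    intro V G l _ _ _
    exact ⟨fun i => i.elim0, fun i => i.elim0, fun i => i.elim0, fun i => i.elim0, fun i => i.elim0,
      fun i => i.elim0⟩
  | succ a ih =>
    intro V G l hl hno hlen
    have h1 : ∃ v ∈ l, 2 * FF m a + 2 < (l.toFinset.filter (fun w => G.Adj v w)).card := by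
      by_contra hcon
      push Not at hcon
      have := deg_lemma hl hno hcon
      simp only [FF] at hlen
      exact absurd hlen (not_lt.2 this)
    obtain ⟨v, hv, hdeg⟩ := h1
    have hcnt : (l.toFinset.filter (fun w => G.Adj v w)).card = l.countP (fun w => decide (G.Adj v w)) := by
      have h0 : l.toFinset.filter (fun w => G.Adj v w) = (l.filter (fun w => decide (G.Adj v w))).toFinset := by
        ext; simp
      rw [h0, List.toFinset_card_of_nodup (hl.1.filter _), List.countP_eq_length_filter]
    rw [hcnt] at hdeg
    obtain ⟨l1, l2, rfl⟩ := List.append_of_mem hv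
    have h2 : ∃ l', l' <:+: (l1 ++ v :: l2) ∧ v ∉ l' ∧ FF m a < l'.countP (fun w => decide (G.Adj v w)) := by
      rw [List.countP_append, List.countP_cons_of_neg (by simp)] at hdeg
      have hnd := hl.1
      rw [List.nodup_append] at hnd
      by_cases hc : FF m a < l1.countP (fun w => decide (G.Adj v w))
      · exact ⟨l1, ⟨[], v :: l2, by simp⟩, fun h => hnd.2.2 v h v (by simp) rfl, hc⟩
      · exact ⟨l2, ⟨l1 ++ [v], [], by simp⟩, (List.nodup_cons.1 hnd.2.1).1, by omega⟩
    obtain ⟨l', hl', hvl', hc⟩ := h2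
    obtain ⟨L, r, hLr, hLlen, hLs⟩ := segs (fun w => G.Adj v w) l'
    rw [← hLlen] at hc
    have hLin : L.flatten <:+: (l1 ++ v :: l2) := by
      refine List.IsInfix.trans ?_ hl'
      rw [hLr]
      exact ⟨[], r, by simp⟩
    have hPL := hl.segm hLin
    have hnil : [] ∉ L := by
      intro h
      obtain ⟨x, hx, _⟩ := hLs _ h
      simp at hx
    have hch := (List.isChain_flatten hnil).1 hPL.2
    have hnd := List.nodup_flatten.1 hPL.1
    let C : SimpleGraph (List V) := ⟨fun s s' => s ≠ s' ∧ s ∈ L ∧ s' ∈ L ∧ ∃ x ∈ s, ∃ y ∈ s', G.Adj x y,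
      ⟨fun s s' ⟨h1, h2, h3, x, hx, y, hy, h4⟩ => ⟨h1.symm, h3, h2, y, hy, x, hx, h4.symm⟩⟩, ⟨fun s h => h.1 rfl⟩⟩
    have hLnd : L.Nodup := by
      refine hnd.2.imp_of_mem ?_
      intro s s' hs hs' hd he
      subst he
      obtain ⟨x, hx, _⟩ := hLs s hs
      exact hd hx hx
    have hdisj : ∀ s ∈ L, ∀ s' ∈ L, s ≠ s' → ∀ x ∈ s, x ∉ s' := by
      intro s hs s' hs' hne x hx hx'
      have : Std.Symm (List.Disjoint (α := V)) := ⟨fun _ _ h => h.symm⟩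
      exact (hnd.2.forall hs hs' hne) hx hx'
    have hLC : L.IsChain C.Adj := by
      rw [List.isChain_iff_getElem]
      intro i hi
      have h5 := (List.isChain_iff_getElem.1 hch.2) i hi
      have hn1 : L[i] ≠ [] := fun h => hnil (h ▸ List.getElem_mem _)
      have hn2 : L[i + 1] ≠ [] := fun h => hnil (h ▸ List.getElem_mem _)
      refine ⟨?_, List.getElem_mem _, List.getElem_mem _, L[i].getLast hn1, List.getLast_mem _,
        L[i + 1].head hn2, List.head_mem _, ?_⟩
      · intro h
        have := (hLnd.getElem_inj_iff).1 h
        omega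
      · exact h5 _ (by rw [List.getLast?_eq_getLast_of_ne_nil hn1]; simp) _ (by rw [List.head?_eq_some_head hn2]; simp)
    have hCno : NoIP C m := by
      refine NoIP_contract (G := G) (fun s => {x | x ∈ s}) ?_ ?_ ?_ ?_ ?_ ⟨v⟩ hno
      · rintro s ⟨s', hs⟩
        obtain ⟨x, hx, _⟩ := hLs s hs.2.1
        exact ⟨x, hx⟩
      · rintro s ⟨s', hs⟩
        exact Conn_chain (hch.1 s hs.2.1)
      · rintro s s' ⟨_, _, _, h⟩
        exact h
      · rintro s s' ⟨t, ht⟩ ⟨t', ht'⟩ hne x hx y hy hxy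
        exact ⟨hne, ht.2.1, ht'.2.1, x, hx, y, hy, hxy⟩
      · rintro s s' ⟨t, ht⟩ ⟨t', ht'⟩ hne
        exact Set.disjoint_left.2 fun x hx => hdisj s ht.2.1 s' ht'.2.1 hne x hx
    obtain ⟨U, hUL, hUne, hUc, hUd, hUa⟩ := ih C L ⟨hLnd, hLC⟩ hCno hc
    let U' : Fin a → Set V := fun i => {x | ∃ s ∈ U i, x ∈ s}
    have hxl : ∀ s ∈ L, ∀ x ∈ s, x ∈ l' := by
      intro s hs x hx
      rw [hLr]
      simp only [List.mem_append, List.mem_flatten]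
      exact Or.inl ⟨s, hs, hx⟩
    have hvU : ∀ i, v ∉ U' i := by
      rintro i ⟨s, hs, hx⟩
      exact hvl' (hxl s (hUL i hs) v hx)
    have hvadj : ∀ i, ∃ b ∈ U' i, G.Adj v b := by
      intro i
      obtain ⟨s, hs⟩ := hUne i
      obtain ⟨x, hx, h⟩ := hLs s (hUL i hs)
      exact ⟨x, ⟨s, hs, hx⟩, h⟩
    refine ⟨Fin.cons {v} U', ?_, ?_, ?_, ?_, ?_⟩
    · intro i
      refine Fin.cases ?_ ?_ i
      · rintro x rfl
        exact hv
      · rintro i x ⟨s, hs, hx⟩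
        exact hl'.subset (hxl s (hUL i hs) x hx)
    · intro i
      refine Fin.cases ?_ ?_ i
      · exact ⟨v, rfl⟩
      · intro i
        obtain ⟨b, hb, _⟩ := hvadj i
        exact ⟨b, hb⟩
    · intro i
      refine Fin.cases ?_ ?_ i
      · exact Conn_single G v
      · intro i
        exact Conn_lift (C := C) (fun s : List V => {x | x ∈ s}) (fun s hs => Conn_chain (hch.1 s (hUL i hs)))
          (fun s _ s' _ h => h.2.2.2) (hUc i)
    · intro i j
      refine Fin.cases ?_ ?_ i
      · refine Fin.cases ?_ ?_ j
        · simp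
        · intro j _
          simpa using hvU j
      · intro i
        refine Fin.cases ?_ ?_ j
        · intro _
          simpa using hvU i
        · intro j hij
          simp only [Fin.cons_succ]
          rw [Set.disjoint_left]
          rintro x ⟨s, hs, hx⟩ ⟨s', hs', hx'⟩
          have hij' : i ≠ j := fun h => hij (by rw [h])
          have hne : s ≠ s' := by
            rintro rfl
            exact Set.disjoint_left.1 (hUd i j hij') hs hs'
          exact hdisj s (hUL i hs) s' (hUL j hs') hne x hx hx'
    · intro i j
      refine Fin.cases ?_ ?_ i
      · refine Fin.cases ?_ ?_ j
        · simp
        · intro j _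
          exact ⟨v, rfl, hvadj j⟩
      · intro i
        refine Fin.cases ?_ ?_ j
        · intro _
          obtain ⟨b, hb, h⟩ := hvadj i
          exact ⟨b, hb, v, rfl, h.symm⟩
        · intro j hij
          have hij' : i ≠ j := fun h => hij (by rw [h])
          obtain ⟨s, hs, s', hs', _, _, _, x, hx, y, hy, hxy⟩ := hUa i j hij'
          exact ⟨x, ⟨s, hs, hx⟩, y, ⟨s', hs', hy⟩, hxy⟩

end
end Topo


namespace Topo

section
open scoped Classical

lemma Conn_of_induce {N : Type} {T : SimpleGraph N} {S : Set N} (h : (T.induce S).Connected) : Conn T S := by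
  intro a ha b hb
  obtain ⟨p⟩ := h.preconnected ⟨a, ha⟩ ⟨b, hb⟩
  have : ∀ (x y : S), (T.induce S).Walk x y → Relation.ReflTransGen (RS T S) x y := by
    intro x y p
    induction p with
    | nil => exact .refl
    | cons h _ ih => exact Relation.ReflTransGen.head ⟨h, Subtype.property _, Subtype.property _⟩ ih
  exact this _ _ p

/-- component of `T - t` -/
def DD {N : Type} (T : SimpleGraph N) (t t' : N) : Set N := {x | Relation.ReflTransGen (RS T {t}ᶜ) t' x}

lemma DD_self {N : Type} {T : SimpleGraph N} (t t' : N) : t' ∈ DD T t t' := Relation.ReflTransGen.refl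

lemma DD_not {N : Type} {T : SimpleGraph N} {t t' : N} (h : T.Adj t t') : t ∉ DD T t t' := by
  intro h'
  rcases Relation.ReflTransGen.cases_tail h' with h1 | ⟨_, _, h1⟩
  · exact h.ne h1
  · exact h1.2.2 rfl

lemma DD_edge {N : Type} {T : SimpleGraph N} (hT : T.IsAcyclic) {t t' x : N} (h : T.Adj t t')
    (hx : x ∈ DD T t t') (hxt : T.Adj x t) : x = t' := by
  by_contra hne
  have hb := (isAcyclic_iff_forall_adj_isBridge.1 hT) hxt.symm
  rw [isBridge_iff] at hb
  apply hb
  have h1 : (T.deleteEdges {s(t, x)}).Reachable t t' := by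
    apply SimpleGraph.Adj.reachable
    simp [h]
    exact ⟨fun h2 => hne h2.symm, fun _ h2 => h.ne h2.symm⟩
  refine h1.trans ?_
  have h2 : Relation.ReflTransGen (RS T {t}ᶜ) t' x := hx
  have key : ∀ y, Relation.ReflTransGen (RS T {t}ᶜ) t' y → (T.deleteEdges {s(t, x)}).Reachable t' y := by
    intro y hy
    induction hy with
    | refl => exact SimpleGraph.Reachable.refl _
    | tail _ h' ih =>
      refine ih.trans (SimpleGraph.Adj.reachable ?_)
      have a1 := h'.2.1
      have a2 := h'.2.2
      simp at a1 a2
      simp [h'.1]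
      tauto
  exact key x h2

lemma DD_cross {N : Type} {T : SimpleGraph N} (hT : T.IsAcyclic) {t t' x : N} {S : Set N} (h : T.Adj t t')
    (hS : Conn T S) (hx : x ∈ S) (hxD : x ∈ DD T t t') (ht : t ∈ S) : t' ∈ S := by
  have key : ∀ y, Relation.ReflTransGen (RS T S) x y → t' ∈ S ∨ y ∈ DD T t t' := by
    intro y hy
    induction hy with
    | refl => exact Or.inr hxD
    | @tail y z _ h' ih =>
      rcases ih with ih | ih
      · exact Or.inl ih
      · by_cases hz : z = t
        · subst hz
          rw [← DD_edge hT h ih h'.1]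
          exact Or.inl h'.2.1
        · by_cases hy : y = t
          · subst hy
            exact absurd ih (DD_not h)
          · exact Or.inr (Relation.ReflTransGen.tail ih ⟨h'.1, hy, hz⟩)
  rcases key t (hS x hx t ht) with h1 | h1
  · exact h1
  · exact absurd h1 (DD_not h)

lemma DD_of_conn {N : Type} {T : SimpleGraph N} {t t' x y : N} {S : Set N} (ht : t ∉ S)
    (h : Relation.ReflTransGen (RS T S) x y) (hx : x ∈ DD T t t') : y ∈ DD T t t' := by
  have : Relation.ReflTransGen (RS T {t}ᶜ) x y := RS_mono (fun z hz => by rintro rfl; exact ht hz) h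
  exact Relation.ReflTransGen.trans hx this

lemma DD_exists {N : Type} {T : SimpleGraph N} (hT : T.Connected) (t x : N) (hx : x ≠ t) :
    ∃ t', T.Adj t t' ∧ x ∈ DD T t t' := by
  obtain ⟨p⟩ := hT.preconnected x t
  induction p with
  | nil => exact absurd rfl hx
  | @cons u v w h p ih =>
    by_cases hv : v = w
    · subst hv
      exact ⟨u, h.symm, DD_self _ _⟩
    · obtain ⟨t', h1, h2⟩ := ih hv
      exact ⟨t', h1, Relation.ReflTransGen.tail h2 ⟨h.symm, hv, hx⟩⟩

lemma DD_sub {N : Type} {T : SimpleGraph N} (hT : T.IsAcyclic) {t t' t'' : N} (h : T.Adj t t')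
    (h' : T.Adj t' t'') (hne : t'' ≠ t) : DD T t' t'' ⊆ DD T t t' := by
  intro x hx
  have hx' : Relation.ReflTransGen (RS T {t'}ᶜ) t'' x := hx
  induction hx' with
  | refl => exact Relation.ReflTransGen.single ⟨h', h.ne.symm, hne⟩
  | @tail y z hy h1 ih =>
    have h2 := ih hy
    have hyt : y ≠ t := by
      rintro rfl
      exact DD_not h h2
    refine Relation.ReflTransGen.tail h2 ⟨h1.1, hyt, ?_⟩
    rintro rfl
    exact h1.2.1 (DD_edge hT h h2 h1.1)

lemma DD_disj {N : Type} {T : SimpleGraph N} (hT : T.IsAcyclic) {t t' x : N} (h : T.Adj t t')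
    (hx : x ∈ DD T t t') : x ∉ DD T t' t := by
  have hx' : Relation.ReflTransGen (RS T {t}ᶜ) t' x := hx
  clear hx
  induction hx' with
  | refl => exact DD_not h.symm
  | @tail y z hy h1 ih =>
    intro hz
    by_cases hyt : y = t'
    · subst hyt
      exact h1.2.2 (DD_edge hT h.symm hz h1.1.symm)
    · have hzt : z ≠ t' := by
        rintro rfl
        exact DD_not h.symm hz
      exact ih (Relation.ReflTransGen.tail hz ⟨h1.1.symm, hzt, hyt⟩)

variable {V N : Type} {G : SimpleGraph V} {T : SimpleGraph N}

/-- vertices strictly behind an edge of the tree -/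
def YY (R : TreeRep G T) (t t' : N) : Set V := {v | t ∉ R.model v ∧ ∃ x ∈ R.model v, x ∈ DD T t t'}

lemma model_conn (R : TreeRep G T) (v : V) : Conn T (R.model v) := Conn_of_induce (R.model_connected v)

lemma model_ne (R : TreeRep G T) (v : V) : (R.model v).Nonempty := by
  obtain ⟨x⟩ := (R.model_connected v).nonempty
  exact ⟨x, x.2⟩

lemma YY_sub (R : TreeRep G T) {t t' : N} {v : V} (h : v ∈ YY R t t') : R.model v ⊆ DD T t t' := by
  intro y hy
  obtain ⟨h1, x, hx, hxD⟩ := h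
  exact DD_of_conn h1 (model_conn R v x hx y hy) hxD

lemma YY_nbr (hT : T.IsTree) (R : TreeRep G T) {t t' : N} (h : T.Adj t t') {v w : V} (hv : v ∈ YY R t t')
    (hw : w ∉ YY R t t') (hvw : G.Adj v w) : w ∈ R.bag t ∩ R.bag t' := by
  obtain ⟨x, hx, hx'⟩ := R.adj_meet hvw
  have hxD := YY_sub R hv hx
  have ht : t ∈ R.model w := by
    by_contra ht
    exact hw ⟨ht, x, hx', hxD⟩
  exact ⟨ht, DD_cross hT.isAcyclic h (model_conn R w) hx' hxD ht⟩

/-- a connected set avoiding a bag lives behind one edge -/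
lemma Conn_behind (hT : T.IsTree) (R : TreeRep G T) (t : N) {K : Set V} (hne : K.Nonempty) (hK : Conn G K)
    (hd : ∀ v ∈ K, v ∉ R.bag t) : ∃ t', T.Adj t t' ∧ K ⊆ YY R t t' := by
  obtain ⟨v, hv⟩ := hne
  obtain ⟨x, hx⟩ := model_ne R v
  obtain ⟨t', h1, h2⟩ := DD_exists hT.connected t x (by rintro rfl; exact hd v hv hx)
  refine ⟨t', h1, fun w hw => ?_⟩
  have := hK v hv w hw
  have hvY : v ∈ YY R t t' := ⟨hd v hv, x, hx, h2⟩
  clear hw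
  induction this with
  | refl => exact hvY
  | tail _ h' ih =>
    obtain ⟨y, hy, hy'⟩ := R.adj_meet h'.1
    exact ⟨hd _ h'.2.2, y, hy', YY_sub R ih hy⟩

lemma tor_torso (hT : T.IsTree) (R : TreeRep G T) (t : N) {u v : V} (h : (tor G (R.bag t)).Adj u v) :
    (R.torso t).Adj ⟨u, h.2.1⟩ ⟨v, h.2.2.1⟩ := by
  obtain ⟨hne, hu, hv, h1⟩ := h
  unfold TreeRep.torso
  rw [fromRel_adj]
  refine ⟨fun h => hne (by simpa using h), Or.inl ?_⟩
  rcases h1 with h1 | ⟨K, hd, hK, ⟨p, hp, hup⟩, q, hq, hvq⟩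
  · exact Or.inl h1
  · obtain ⟨t', ht', hKY⟩ := Conn_behind hT R t ⟨p, hp⟩ hK (fun v hv => Set.disjoint_left.1 hd hv)
    have hu' : u ∉ YY R t t' := fun h => h.1 hu
    have hv' : v ∉ YY R t t' := fun h => h.1 hv
    exact Or.inr ⟨t', ht', (YY_nbr hT R ht' (hKY hp) hu' hup.symm).2, (YY_nbr hT R ht' (hKY hq) hv' hvq.symm).2⟩

/-- adhesion bound -/
lemma adhesion [Fintype V] (R : TreeRep G T) {k : ℕ} {t t' : N} (h : T.Adj t t')
    (ht : AlmostEmbeddable (R.torso t) k k k k ∨ AlmostBoundedDegree (R.torso t) k k) :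
    (R.bag t ∩ R.bag t').ncard ≤ TT k + 2 * k + 1 := by
  let Q : Set (R.bag t) := {u | (u : V) ∈ R.bag t'}
  have hQ : (R.bag t ∩ R.bag t').ncard = Q.ncard := by
    rw [← Set.ncard_image_of_injective Q Subtype.val_injective]
    congr 1
    ext x
    simp [Q, and_comm]
  have hcl : ∀ u ∈ Q, ∀ v ∈ Q, u ≠ v → (R.torso t).Adj u v := by
    intro u hu v hv hne
    unfold TreeRep.torso
    rw [fromRel_adj]
    exact ⟨hne, Or.inl (Or.inr ⟨t', h, hu, hv⟩)⟩
  rw [hQ]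
  rcases ht with ht | ⟨X, hX, hdeg⟩
  · obtain ⟨A, hA, hmin⟩ := no_minor ht
    have h1 : Q.ncard ≤ (Q \ A).ncard + A.ncard := Set.ncard_le_ncard_sdiff_add_ncard Q A
    let e := Finite.equivFin ↥(Q \ A)
    have h2 := hmin (Nat.card ↥(Q \ A)) (fun i => {((e.symm i : ↥(Q \ A)) : R.bag t)})
      (fun i => by simpa using (e.symm i).2.2) (fun i => ⟨_, rfl⟩) (fun i => Conn_single _ _)
      (fun i j hij => by
        simp only [Set.disjoint_singleton]
        intro h
        exact hij (e.symm.injective (Subtype.ext h)))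
      (fun i j hij => ⟨_, rfl, _, rfl, hcl _ (e.symm i).2.1 _ (e.symm j).2.1 (by
        intro h
        exact hij (e.symm.injective (Subtype.ext h)))⟩)
    rw [Nat.card_coe_set_eq] at h2
    omega
  · have h1 : Q.ncard ≤ (Q \ X).ncard + X.ncard := Set.ncard_le_ncard_sdiff_add_ncard Q X
    by_cases hne : (Q \ X).Nonempty
    · obtain ⟨v, hv⟩ := hne
      have h2 := hdeg v hv.2
      have h3 : Q \ X ⊆ insert v {w | w ∉ X ∧ (R.torso t).Adj v w} := by
        intro w hw
        by_cases hwv : w = v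
        · exact Or.inl hwv
        · exact Or.inr ⟨hw.2, hcl v hv.1 w hw.1 (Ne.symm hwv)⟩
      have h4 := Set.ncard_le_ncard h3 (Set.toFinite _)
      have h5 := Set.ncard_insert_le v {w | w ∉ X ∧ (R.torso t).Adj v w}
      omega
    · rw [Set.not_nonempty_iff_eq_empty] at hne
      rw [hne, Set.ncard_empty] at h1
      omega

def WB (k m : ℕ) : ℕ := (k + 1) * ((k + 1) ^ m + FF m (TT k + 1)) + k

lemma countP_le_ncard {V : Type} {l : List V} (h : l.Nodup) (Y : Set V) [Finite V] :
    l.countP (fun x => decide (x ∈ Y)) ≤ Y.ncard := by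
  have : Fintype V := Fintype.ofFinite V
  rw [List.countP_eq_length_filter, ← List.toFinset_card_of_nodup (h.filter _), ← Set.ncard_coe_finset]
  apply Set.ncard_le_ncard _ (Set.toFinite _)
  intro x hx
  simp at hx
  exact hx.2

/-- bag bound -/
lemma bag_bound [Fintype V] (hT : T.IsTree) (R : TreeRep G T) {k m : ℕ} (hno : NoIP G m) {l : List V}
    (hl : PL G l) (hall : ∀ v, v ∈ l) {t : N}
    (ht : AlmostEmbeddable (R.torso t) k k k k ∨ AlmostBoundedDegree (R.torso t) k k) :
    (R.bag t).ncard ≤ WB k m := by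
  have hl1 := PL_tor (R.bag t) hl
  have hno1 := NoIP_tor (R.bag t) hno
  set l1 := l.filter (fun x => decide (x ∈ R.bag t)) with hl1d
  have hmem : ∀ x ∈ l1, x ∈ R.bag t := by
    intro x hx
    simp [hl1d] at hx
    exact hx.2
  have hcard : (R.bag t).ncard = l1.length := by
    rw [← List.toFinset_card_of_nodup hl1.1, ← Set.ncard_coe_finset]
    congr 1
    ext x
    simp [hl1d, hall]
  rw [hcard]
  have main : ∀ A : Set (R.bag t), A.ncard ≤ k → (∀ l', l' <:+: l1 → (∀ x ∈ l', x ∉ Subtype.val '' A) →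
      l'.length ≤ (k + 1) ^ m + FF m (TT k + 1)) → l1.length ≤ WB k m := by
    intro A hA hB
    refine split_lemma List.length (by simp) (by simp) (Subtype.val '' A) _ k l1 ?_ hB
    refine (countP_le_ncard hl1.1 _).trans ?_
    rwa [Set.ncard_image_of_injective A Subtype.val_injective]
  rcases ht with ht | ⟨X, hX, hdeg⟩
  · obtain ⟨A, hA, hmin⟩ := no_minor ht
    refine main A hA fun l' hl' hdis => ?_
    by_contra hlen
    push Not at hlen
    obtain ⟨U, hU, hUne, hUc, hUd, hUa⟩ := minor_ext m (TT k + 1) (tor G (R.bag t)) l' (hl1.segm hl') hno1 (by omega)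
    have hUb : ∀ i, ∀ x ∈ U i, x ∈ R.bag t := fun i x hx => hmem x (hl'.subset (hU i hx))
    have := hmin (TT k + 1) (fun i => Subtype.val ⁻¹' U i) ?_ ?_ ?_ ?_ ?_
    · omega
    · intro i
      rw [Set.disjoint_left]
      intro x hx hxA
      exact hdis x (hU i hx) ⟨x, hxA, rfl⟩
    · intro i
      obtain ⟨x, hx⟩ := hUne i
      exact ⟨⟨x, hUb i x hx⟩, hx⟩
    · rintro i ⟨a, ha⟩ hai ⟨b, hb⟩ hbi
      have h1 := hUc i a hai b hbi
      have key : ∀ y, Relation.ReflTransGen (RS (tor G (R.bag t)) (U i)) a y → ∃ hy : y ∈ R.bag t,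
          Relation.ReflTransGen (RS (R.torso t) (Subtype.val ⁻¹' U i)) ⟨a, ha⟩ ⟨y, hy⟩ := by
        intro y hy
        induction hy with
        | refl => exact ⟨ha, .refl⟩
        | tail _ h' ih =>
          obtain ⟨hy, ih⟩ := ih
          exact ⟨h'.1.2.2.1, ih.tail ⟨tor_torso hT R t h'.1, h'.2.1, h'.2.2⟩⟩
      exact (key b h1).2
    · intro i j hij
      exact (hUd i j hij).preimage _
    · intro i j hij
      obtain ⟨a, ha, b, hb, hab⟩ := hUa i j hij
      exact ⟨⟨a, hab.2.1⟩, ha, ⟨b, hab.2.2.1⟩, hb, tor_torso hT R t hab⟩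
  · refine main X hX fun l' hl' hdis => ?_
    have := deg_lemma (hl1.segm hl') hno1 (D := k) ?_
    · omega
    · intro v hv
      have hvb : v ∈ R.bag t := hmem v (hl'.subset hv)
      have h1 := hdeg ⟨v, hvb⟩ (fun h => hdis v hv ⟨_, h, rfl⟩)
      refine le_trans ?_ h1
      rw [← Set.ncard_image_of_injective _ Subtype.val_injective, ← Set.ncard_coe_finset]
      apply Set.ncard_le_ncard _ (Set.toFinite _)
      intro w hw
      simp only [Finset.coe_filter, List.mem_toFinset, Set.mem_ofPred_eq] at hw
      exact ⟨⟨w, hw.2.2.2.1⟩, ⟨fun h => hdis w hw.1 ⟨_, h, rfl⟩, tor_torso hT R t hw.2⟩, rfl⟩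

end
end Topo


namespace Topo

section
open scoped Classical

lemma geoset {V : Type} {G : SimpleGraph V} {W : Set V} {m : ℕ} (hW : Conn G W) (hno : NoIP G m) {u w : V}
    (hu : u ∈ W) (hw : w ∈ W) : ∃ Q : Finset V, Q.card ≤ m ∧ (∀ x ∈ Q, x ∈ W) ∧ Relation.ReflTransGen (RS G (Q : Set V)) u w := by
  let H : SimpleGraph V := ⟨RS G W, ⟨fun x y h => ⟨h.1.symm, h.2.2, h.2.1⟩⟩, ⟨fun x h => G.irrefl h.1⟩⟩
  have hr : ∀ b ∈ W, H.Reachable u b := by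
    intro b hb
    have h := hW u hu b hb
    clear hb
    induction h with
    | refl => exact SimpleGraph.Reachable.refl _
    | tail _ h' ih =>
      have h' : H.Adj _ _ := h'
      exact ih.trans h'.reachable
  have hlt : H.dist u w + 1 ≤ m := by
    by_contra hcon
    refine level hu (hW u hu w hw) (fun x => H.dist u x) ?_ (by simp) (l := m) (by omega) hno
    intro x hx y hy hxy
    obtain ⟨p, hp⟩ := (hr x hx).exists_walk_length_eq_dist
    have hH : H.Adj x y := ⟨hxy, hx, hy⟩
    have := SimpleGraph.dist_le (p.concat hH)
    rw [SimpleGraph.Walk.length_concat, hp] at this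
    exact this
  obtain ⟨p, hp⟩ := (hr w hw).exists_walk_length_eq_dist
  refine ⟨p.support.toFinset, ?_, ?_, ?_⟩
  · refine (List.toFinset_card_le _).trans ?_
    rw [SimpleGraph.Walk.length_support]
    omega
  · clear hp hlt hw hr
    induction p with
    | nil => simpa using hu
    | cons h p ih =>
      intro x hx
      simp only [SimpleGraph.Walk.support_cons, List.toFinset_cons, Finset.mem_insert] at hx
      rcases hx with rfl | hx
      · exact hu
      · exact ih h.2.2 x hx
  · clear hp hlt hw hu hr
    induction p with
    | nil => exact .refl
    | @cons a b c h p ih =>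
      refine Relation.ReflTransGen.head (b := b) ⟨h.1, by simp, by simp⟩ (RS_mono ?_ ih)
      intro z hz
      simp at hz ⊢
      exact Or.inr hz

def gg (m : ℕ) : ℕ → ℕ
  | 0 => 1
  | a + 1 => (m + 1) * gg m a + m

lemma cross_edge {V : Type} {G : SimpleGraph V} {Q : Set V} (f : V → ℕ) {i : ℕ} {u w : V}
    (h : Relation.ReflTransGen (RS G Q) u w) (hu : f u ≤ i) (hw : i < f w) :
    ∃ x ∈ Q, ∃ y ∈ Q, G.Adj x y ∧ f x ≤ i ∧ i < f y := by
  induction h with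
  | refl => omega
  | @tail y z _ h' ih =>
    by_cases hy : i < f y
    · exact ih hy
    · exact ⟨y, h'.2.1, z, h'.2.2, h'.1, by omega, hw⟩

/-- cut lemma -/
lemma cut_lemma {V : Type} {G : SimpleGraph V} {m : ℕ} (hno : NoIP G m) (f : V → ℕ) (a : ℕ) :
    ∀ l : List V, PL G l →
      (∀ i, (l.toFinset.filter (fun v => f v ≤ i ∧ ∃ w ∈ l, G.Adj v w ∧ i < f w)).card ≤ a) →
      (l.toFinset.image f).card ≤ gg m a := by
  induction a with
  | zero =>
    intro l hl hc
    simp only [gg]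
    rw [Finset.card_le_one]
    intro p hp q hq
    simp only [Finset.mem_image, List.mem_toFinset] at hp hq
    obtain ⟨u, hu, rfl⟩ := hp
    obtain ⟨w, hw, rfl⟩ := hq
    have key : ∀ u ∈ l, ∀ w ∈ l, ¬ f u < f w := by
      intro u hu w hw hlt
      obtain ⟨x, hx, y, hy, hxy, h1, h2⟩ := cross_edge f (Conn_chain hl.2 u hu w hw) le_rfl hlt
      have := hc (f u)
      rw [Nat.le_zero, Finset.card_eq_zero] at this
      have hx' : x ∈ (∅ : Finset V) := by
        rw [← this]
        simp only [Finset.mem_filter, List.mem_toFinset]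
        exact ⟨hx, h1, y, hy, hxy, h2⟩
      simp at hx'
    have h1 := key u hu w hw
    have h2 := key w hw u hu
    omega
  | succ a ih =>
    intro l hl hc
    by_cases hne : l = []
    · subst hne
      simp
    have hne' : l.toFinset.Nonempty := by
      rwa [List.toFinset_nonempty_iff]
    obtain ⟨u, hu, hmin⟩ := Finset.exists_min_image l.toFinset f hne'
    obtain ⟨w, hw, hmax⟩ := Finset.exists_max_image l.toFinset f hne'
    rw [List.mem_toFinset] at hu hw
    simp only [List.mem_toFinset] at hmin hmax
    obtain ⟨Q, hQ, hQl, hQr⟩ := geoset (Conn_chain hl.2) hno hu hw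
    refine split_lemma (fun l' => (l'.toFinset.image f).card) (by simp) ?_ (Q : Set V) _ m l ?_ ?_
    · intro l1 l2
      simp only [List.toFinset_append, Finset.image_union]
      exact Finset.card_union_le _ _
    · rw [List.countP_eq_length_filter, ← List.toFinset_card_of_nodup (hl.1.filter _)]
      refine le_trans (Finset.card_le_card ?_) hQ
      intro x hx
      simp at hx
      exact hx.2
    · intro l' hl' hd
      refine ih l' (hl.segm hl') fun i => ?_
      by_cases hi : f u ≤ i ∧ i < f w
      · obtain ⟨x, hx, y, hy, hxy, h1, h2⟩ := cross_edge f hQr hi.1 hi.2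
        have hxm : x ∈ l.toFinset.filter (fun v => f v ≤ i ∧ ∃ w ∈ l, G.Adj v w ∧ i < f w) := by
          simp only [Finset.mem_filter, List.mem_toFinset]
          exact ⟨hQl x hx, h1, y, hQl y hy, hxy, h2⟩
        have hsub : l'.toFinset.filter (fun v => f v ≤ i ∧ ∃ w ∈ l', G.Adj v w ∧ i < f w) ⊆
            (l.toFinset.filter (fun v => f v ≤ i ∧ ∃ w ∈ l, G.Adj v w ∧ i < f w)).erase x := by
          intro z hz
          simp only [Finset.mem_filter, List.mem_toFinset, Finset.mem_erase] at hz ⊢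
          obtain ⟨hz1, hz2, z', hz3, hz4⟩ := hz
          refine ⟨?_, hl'.subset hz1, hz2, z', hl'.subset hz3, hz4⟩
          rintro rfl
          exact hd z hz1 hx
        have h3 := Finset.card_le_card hsub
        rw [Finset.card_erase_of_mem hxm] at h3
        have := hc i
        omega
      · rw [Finset.filter_eq_empty_iff.2]
        · simp
        · rintro z hz ⟨hz2, z', hz3, _, hz4⟩
          rw [List.mem_toFinset] at hz
          have h1 := hmin z (hl'.subset hz)
          have h2 := hmax z' (hl'.subset hz3)
          omega

variable {V N : Type} {G : SimpleGraph V} {T : SimpleGraph N}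

/-- some branch carries a large part of `Z` -/
lemma branch [Fintype V] (hT : T.IsTree) (R : TreeRep G T) {l : List V} (hl : PL G l) (hall : ∀ v, v ∈ l)
    (W : ℕ) (t' : N) (hW : (R.bag t').ncard ≤ W) (Z : Set V) (hZ : W < Z.ncard) :
    ∃ t'', T.Adj t' t'' ∧ (Z ∩ YY R t' t'').Nonempty ∧ Z.ncard ≤ (2 * W + 2) * (Z ∩ YY R t' t'').ncard := by
  have h0 : ∃ t'', T.Adj t' t'' ∧ Z.ncard ≤ (W + 1) * (Z ∩ YY R t' t'').ncard + W := by
    by_contra hcon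
    push Not at hcon
    have hB : ∀ t'', T.Adj t' t'' → (Z ∩ YY R t' t'').ncard ≤ (Z.ncard - W - 1) / (W + 1) := by
      intro t'' h
      rw [Nat.le_div_iff_mul_le (by omega)]
      have := hcon t'' h
      rw [mul_comm]
      omega
    have h1 := split_lemma (fun l' : List V => l'.countP (fun x => decide (x ∈ Z)))
      (by intro v; exact List.countP_le_length) (by intro l l'; simp [List.countP_append]) (R.bag t')
      ((Z.ncard - W - 1) / (W + 1)) W l ((countP_le_ncard hl.1 _).trans hW) ?_
    · have h2 : l.countP (fun x => decide (x ∈ Z)) = Z.ncard := by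
        rw [List.countP_eq_length_filter, ← List.toFinset_card_of_nodup (hl.1.filter _), ← Set.ncard_coe_finset]
        congr 1
        ext x
        simp [hall]
      have h3 := Nat.mul_div_le (Z.ncard - W - 1) (W + 1)
      simp only [h2] at h1
      omega
    · intro l' hl' hd
      rcases l' with _ | ⟨v, l''⟩
      · simp
      · have hP := hl.segm hl'
        obtain ⟨t'', h, hsub⟩ := Conn_behind hT R t' (K := {x | x ∈ v :: l''}) ⟨v, by simp⟩ (Conn_chain hP.2) hd
        refine le_trans ?_ (hB t'' h)
        rw [List.countP_eq_length_filter, ← List.toFinset_card_of_nodup (hP.1.filter _), ← Set.ncard_coe_finset]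
        apply Set.ncard_le_ncard _ (Set.toFinite _)
        intro x hx
        rw [List.coe_toFinset, Set.mem_ofPred_eq, List.mem_filter] at hx
        exact ⟨by simpa using hx.2, hsub hx.1⟩
  obtain ⟨t'', h, h1⟩ := h0
  have hpos : 0 < (Z ∩ YY R t' t'').ncard := by
    by_contra hp
    have : (Z ∩ YY R t' t'').ncard = 0 := by omega
    rw [this] at h1
    omega
  refine ⟨t'', h, (Set.ncard_pos (Set.toFinite _)).1 hpos, ?_⟩
  nlinarith

lemma YY_mono (hT : T.IsTree) (R : TreeRep G T) {t t' t'' : N} (h : T.Adj t t') (h' : T.Adj t' t'')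
    (hne : t'' ≠ t) : YY R t' t'' ⊆ YY R t t' := by
  intro v hv
  have h1 := YY_sub R hv
  have h2 := DD_sub hT.isAcyclic h h' hne
  obtain ⟨x, hx⟩ := model_ne R v
  exact ⟨fun ht => DD_not h (h2 (h1 ht)), x, hx, h2 (h1 hx)⟩

lemma next_step [Fintype V] [Fintype N] (hT : T.IsTree) (R : TreeRep G T) {l : List V} (hl : PL G l)
    (hall : ∀ v, v ∈ l) (W : ℕ) (hW : ∀ t, (R.bag t).ncard ≤ W) (n : ℕ) :
    ∀ t t', T.Adj t t' → (DD T t t').ncard ≤ n → W < (YY R t t').ncard →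
    ∃ s s', T.Adj s s' ∧ YY R s s' ⊂ YY R t t' ∧ (YY R t t').ncard ≤ (2 * W + 2) * (YY R s s').ncard := by
  induction n with
  | zero =>
    intro t t' h hn _
    have := (Set.ncard_pos (Set.toFinite _)).2 ⟨t', DD_self (T := T) t t'⟩
    omega
  | succ n ih =>
    intro t t' h hn hlt
    obtain ⟨t'', h', hne, hle⟩ := branch hT R hl hall W t' (hW t') _ hlt
    have hneq : t'' ≠ t := by
      rintro rfl
      obtain ⟨v, hv, hv'⟩ := hne
      obtain ⟨x, hx⟩ := model_ne R v
      exact DD_disj hT.isAcyclic h (YY_sub R hv hx) (YY_sub R hv' hx)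
    have hsub := YY_mono hT R h h' hneq
    rw [Set.inter_eq_right.2 hsub] at hle
    by_cases heq : YY R t' t'' = YY R t t'
    · rw [← heq]
      refine ih t' t'' h' ?_ (by rwa [heq])
      have hss : DD T t' t'' ⊂ DD T t t' := by
        refine ⟨DD_sub hT.isAcyclic h h' hneq, fun hh => ?_⟩
        exact DD_not h' (hh (DD_self t t'))
      have := Set.ncard_lt_ncard hss (Set.toFinite _)
      omega
    · exact ⟨t', t'', h', hsub.ssubset_of_ne heq, hle⟩

lemma nested [Fintype V] [Fintype N] (hT : T.IsTree) (R : TreeRep G T) {l : List V} (hl : PL G l)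
    (hall : ∀ v, v ∈ l) (W : ℕ) (hW : ∀ t, (R.bag t).ncard ≤ W) (M : ℕ) :
    ∀ t t', T.Adj t t' → (2 * W + 2) ^ M ≤ (YY R t t').ncard → ∃ Y : ℕ → Set V, Y 0 = YY R t t' ∧
      (∀ i < M, Y (i + 1) ⊂ Y i) ∧ (∀ i ≤ M, ∃ s s', T.Adj s s' ∧ Y i = YY R s s') ∧ (Y M).Nonempty := by
  induction M with
  | zero =>
    intro t t' h hle
    refine ⟨fun _ => YY R t t', rfl, by simp, fun _ _ => ⟨t, t', h, rfl⟩, ?_⟩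
    have h1 : 0 < (YY R t t').ncard := by
      rw [pow_zero] at hle
      exact hle
    exact (Set.ncard_pos (Set.toFinite _)).1 h1
  | succ M ih =>
    intro t t' h hle
    have hpos : 0 < (2 * W + 2) ^ M := by positivity
    have hlt : W < (YY R t t').ncard := by
      rw [pow_succ] at hle
      nlinarith
    obtain ⟨s, s', hs, hss, hle'⟩ := next_step hT R hl hall W hW _ t t' h le_rfl hlt
    obtain ⟨Y, hY0, hY1, hY2, hY3⟩ := ih s s' hs (by
      have := hle.trans hle'
      rw [pow_succ, mul_comm] at this
      exact Nat.le_of_mul_le_mul_left this (by omega))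
    refine ⟨fun i => Nat.casesOn i (YY R t t') Y, rfl, ?_, ?_, hY3⟩
    · intro i hi
      rcases i with _ | i
      · change Y 0 ⊂ _
        rw [hY0]
        exact hss
      · exact hY1 i (by omega)
    · intro i hi
      rcases i with _ | i
      · exact ⟨t, t', h, rfl⟩
      · exact hY2 i (by omega)

lemma order_bound [Fintype V] [Fintype N] (hT : T.IsTree) (R : TreeRep G T) {l : List V} (hl : PL G l)
    (hall : ∀ v, v ∈ l) (W a m : ℕ) (hno : NoIP G m) (hW : ∀ t, (R.bag t).ncard ≤ W)
    (ha : ∀ t t', T.Adj t t' → (R.bag t ∩ R.bag t').ncard ≤ a) :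
    Fintype.card V < (2 * W + 2) ^ (gg m a + 1) := by
  by_contra hcon
  push Not at hcon
  have hcard : (Set.univ : Set V).ncard = Fintype.card V := by
    rw [Set.ncard_univ, Nat.card_eq_fintype_card]
  obtain ⟨t0⟩ := hT.connected.nonempty
  have hpos : 0 < (2 * W + 2) ^ (gg m a) := by positivity
  rw [pow_succ] at hcon
  obtain ⟨t1, h1, _, h2⟩ := branch hT R hl hall W t0 (hW t0) Set.univ (by rw [hcard]; nlinarith)
  rw [Set.univ_inter, hcard] at h2
  have h3 : (2 * W + 2) ^ (gg m a) ≤ (YY R t0 t1).ncard := by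
    have := hcon.trans h2
    rw [mul_comm] at this
    exact Nat.le_of_mul_le_mul_left this (by omega)
  obtain ⟨Y, _, hY1, hY2, hY3⟩ := nested hT R hl hall W hW _ t0 t1 h1 h3
  set M := gg m a with hM
  have hanti : ∀ i j, i ≤ j → j ≤ M → Y j ⊆ Y i := by
    intro i j hij hj
    induction hij with
    | refl => exact subset_rfl
    | step h ih => exact (hY1 _ (by omega)).subset.trans (ih (by omega))
  let f : V → ℕ := fun v => ((Finset.range (M + 1)).filter (fun i => v ∈ Y i)).card
  have hf : ∀ v i, i ≤ M → (v ∈ Y i ↔ i < f v) := by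
    intro v i hi
    constructor
    · intro hv
      have : Finset.range (i + 1) ⊆ (Finset.range (M + 1)).filter (fun i => v ∈ Y i) := by
        intro j hj
        simp only [Finset.mem_range, Finset.mem_filter] at hj ⊢
        exact ⟨by omega, hanti j i (by omega) hi hv⟩
      have := Finset.card_le_card this
      rw [Finset.card_range] at this
      exact this
    · intro hv
      by_contra hn
      have : (Finset.range (M + 1)).filter (fun i => v ∈ Y i) ⊆ Finset.range i := by
        intro j hj
        simp only [Finset.mem_range, Finset.mem_filter] at hj ⊢
        by_contra hij
        exact hn (hanti i j (by omega) (by omega) hj.2)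
      have := Finset.card_le_card this
      rw [Finset.card_range] at this
      exact absurd hv (not_lt.2 this)
  have hfle : ∀ v, f v ≤ M + 1 := by
    intro v
    refine (Finset.card_filter_le _ _).trans ?_
    rw [Finset.card_range]
  have hcut := cut_lemma hno f a l hl ?_
  · have hsub : (Finset.range (M + 1)).image (fun i => i + 1) ⊆ l.toFinset.image f := by
      intro j hj
      simp only [Finset.mem_image, Finset.mem_range, List.mem_toFinset] at hj ⊢
      obtain ⟨i, hi, rfl⟩ := hj
      by_cases hiM : i = M
      · obtain ⟨v, hv⟩ := hY3
        have := (hf v M le_rfl).1 hv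
        have := hfle v
        exact ⟨v, hall v, by omega⟩
      · obtain ⟨v, hv, hv'⟩ := Set.exists_of_ssubset (hY1 i (by omega))
        rw [hf v i (by omega)] at hv
        rw [hf v (i + 1) (by omega)] at hv'
        exact ⟨v, hall v, by omega⟩
    have h5 := Finset.card_le_card hsub
    rw [Finset.card_image_of_injective _ (fun _ _ h => by simpa using h), Finset.card_range] at h5
    omega
  · intro i
    by_cases hi : i ≤ M
    · obtain ⟨s, s', hs, hYs⟩ := hY2 i hi
      refine le_trans ?_ (ha s s' hs)
      rw [← Set.ncard_coe_finset]
      apply Set.ncard_le_ncard _ (Set.toFinite _)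
      intro v hv
      simp only [Finset.coe_filter, List.mem_toFinset, Set.mem_ofPred_eq] at hv
      obtain ⟨_, h1, w, _, h2, h3⟩ := hv
      refine YY_nbr hT R hs (v := w) ?_ ?_ h2.symm
      · rw [← hYs, hf w i hi]
        exact h3
      · rw [← hYs, hf v i hi]
        omega
    · rw [Finset.filter_eq_empty_iff.2]
      · simp
      · rintro z hz ⟨hz2, z', hz3, _, hz4⟩
        have := hfle z'
        omega

lemma gg_eq (m a : ℕ) : gg m a + 1 = 2 * (m + 1) ^ a := by
  induction a with
  | zero => rfl
  | succ a ih =>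
    simp only [gg]
    calc (m + 1) * gg m a + m + 1 = (m + 1) * (gg m a + 1) := by ring
      _ = _ := by rw [ih]; ring

lemma FF_le (m a : ℕ) (hm : 1 ≤ m) : ∃ e, 2 * FF m a + 3 ≤ 2 ^ e ∧ e + 3 ≤ 5 * (2 * m) ^ a := by
  induction a with
  | zero => exact ⟨2, by simp [FF]⟩
  | succ a ih =>
    obtain ⟨e, h1, h2⟩ := ih
    refine ⟨e * m + 3, ?_, ?_⟩
    · simp only [FF]
      have h3 : (2 * FF m a + 3) ^ m ≤ (2 ^ e) ^ m := Nat.pow_le_pow_left h1 m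
      rw [← pow_mul] at h3
      have h4 : 1 ≤ 2 ^ (e * m) := Nat.one_le_two_pow
      rw [pow_add]
      omega
    · have h3 : (2 * m) * (e + 3) ≤ (2 * m) * (5 * (2 * m) ^ a) := Nat.mul_le_mul_left _ h2
      rw [pow_succ]
      nlinarith [Nat.zero_le (e * m)]

lemma final_bound (k m a n : ℕ) (hm : 1 ≤ m) (h : n < (2 * WB k m + 2) ^ (gg m a + 1)) :
    n < 2 ^ ((4 * k + 14) * (2 * m) ^ (a + (TT k + 1))) := by
  obtain ⟨e, h1, h2⟩ := FF_le m (TT k + 1) hm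
  have hk : k + 1 ≤ 2 ^ k := Nat.lt_two_pow_self
  have h3 : 2 * WB k m + 2 = 2 * (k + 1) * ((k + 1) ^ m + FF m (TT k + 1) + 1) := by
    unfold WB
    ring
  have h4 : (k + 1) ^ m ≤ 2 ^ (k * m) := by
    rw [pow_mul]
    exact Nat.pow_le_pow_left hk m
  have h5 : 2 * WB k m + 2 ≤ 2 ^ (2 + k + k * m + e) := by
    rw [h3]
    have h6 : 1 ≤ 2 ^ (k * m) := Nat.one_le_two_pow
    have h7 : 1 ≤ 2 ^ e := Nat.one_le_two_pow
    have h8 : (k + 1) ^ m + FF m (TT k + 1) + 1 ≤ 2 * (2 ^ (k * m) * 2 ^ e) := by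
      have : FF m (TT k + 1) + 1 ≤ 2 ^ e := by omega
      nlinarith
    calc 2 * (k + 1) * ((k + 1) ^ m + FF m (TT k + 1) + 1) ≤ 2 * 2 ^ k * (2 * (2 ^ (k * m) * 2 ^ e)) :=
          Nat.mul_le_mul (Nat.mul_le_mul_left _ hk) h8
      _ = _ := by rw [pow_add, pow_add, pow_add]; ring
  have h9 : 2 + k + k * m + e ≤ (2 * k + 7) * (2 * m) ^ (TT k + 1) := by
    have h10 : 2 * m ≤ (2 * m) ^ (TT k + 1) := Nat.le_self_pow (by omega) _
    nlinarith
  have h11 : gg m a + 1 ≤ 2 * (2 * m) ^ a := by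
    rw [gg_eq]
    exact Nat.mul_le_mul_left _ (Nat.pow_le_pow_left (by omega) a)
  refine lt_of_lt_of_le h ?_
  calc (2 * WB k m + 2) ^ (gg m a + 1) ≤ (2 ^ (2 + k + k * m + e)) ^ (gg m a + 1) := Nat.pow_le_pow_left h5 _
    _ = 2 ^ ((2 + k + k * m + e) * (gg m a + 1)) := by rw [← pow_mul]
    _ ≤ _ := by
      apply Nat.pow_le_pow_right (by omega)
      calc _ ≤ ((2 * k + 7) * (2 * m) ^ (TT k + 1)) * (2 * (2 * m) ^ a) := Nat.mul_le_mul h9 h11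
        _ = _ := by rw [pow_add]; ring

end
end Topo

theorem stmt19 (k : ℕ) :
    ∃ c d : ℝ, 0 < c ∧ 0 < d ∧ d < 1 ∧
      ∀ {V : Type} [Fintype V] (G : SimpleGraph V) (n : ℕ),
        (∃ (N : Type) (_ : Fintype N) (T : SimpleGraph N) (_ : T.IsTree) (R : TreeRep G T),
          ∀ t ,
            AlmostEmbeddable (R.torso t) k k k k ∨ AlmostBoundedDegree (R.torso t) k k) →
        HasHamPath G → Fintype.card V = n →
        HasInducedPathGE G (c * Real.logb 2 n ^ d) := by
  classical
  have hC : (0 : ℝ) < 4 * k + 14 := by positivity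
  set E : ℕ := (Topo.TT k + 2 * k + 1) + (Topo.TT k + 1) with hE
  have hE1 : 1 ≤ Topo.TT k := by unfold Topo.TT; omega
  have hE2 : 2 ≤ E := by omega
  have hER : (2 : ℝ) ≤ E := by exact_mod_cast hE2
  have hq : (0 : ℝ) < (4 * k + 14 : ℝ) ^ ((E : ℝ)⁻¹) := Real.rpow_pos_of_pos hC _
  refine ⟨(4 * (4 * k + 14 : ℝ) ^ ((E : ℝ)⁻¹))⁻¹, (E : ℝ)⁻¹, by positivity, by positivity, ?_, ?_⟩
  · rw [inv_lt_one₀ (by linarith)]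
    linarith
  intro V _ G n hrep hham hn
  obtain ⟨N, _, T, hT, R, hR⟩ := hrep
  obtain ⟨u, v, p, hp, hall⟩ := hham
  have hl : Topo.PL G p.support := ⟨hp.support_nodup, p.isChain_adj_support⟩
  have hex : ∃ m, Topo.NoIP G m := by
    refine ⟨Fintype.card V + 1, ⟨fun f => ?_⟩⟩
    have := Fintype.card_le_of_injective f f.injective
    rw [Fintype.card_fin] at this
    omega
  obtain ⟨m, hm, hmin⟩ : ∃ m, Topo.NoIP G m ∧ ∀ m' < m, ¬ Topo.NoIP G m' :=
    ⟨Nat.find hex, Nat.find_spec hex, fun m' h => Nat.find_min hex h⟩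
  have hm2 := Topo.NoIP_one u hm
  have hemb : Nonempty (pathGraph (m - 1) ↪g G) := by
    have := hmin (m - 1) (by omega)
    unfold Topo.NoIP at this
    rwa [not_isEmpty_iff] at this
  refine ⟨m - 1, ?_, hemb⟩
  have hb := Topo.order_bound hT R hl hall (Topo.WB k m) (Topo.TT k + 2 * k + 1) m hm
    (fun t => Topo.bag_bound hT R hm hl hall (hR t)) (fun t t' h => Topo.adhesion R h (hR t))
  have hb2 := Topo.final_bound k m _ _ (by omega) hb
  rw [← hE, hn] at hb2
  have hn1 : 1 ≤ n := by
    rw [← hn]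
    exact Fintype.card_pos_iff.2 ⟨u⟩
  have hlog0 : 0 ≤ Real.logb 2 n := Real.logb_nonneg (by norm_num) (by exact_mod_cast hn1)
  have hlog : Real.logb 2 n ≤ (4 * k + 14) * (4 * ((m - 1 : ℕ) : ℝ)) ^ E := by
    have h1 : Real.logb 2 n ≤ (((4 * k + 14) * (2 * m) ^ E : ℕ) : ℝ) := by
      rw [Real.logb_le_iff_le_rpow (by norm_num) (by exact_mod_cast hn1), Real.rpow_natCast]
      exact_mod_cast hb2.le
    refine h1.trans ?_
    have h2 : (4 * k + 14) * (2 * m) ^ E ≤ (4 * k + 14) * (4 * (m - 1)) ^ E :=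
      Nat.mul_le_mul_left _ (Nat.pow_le_pow_left (by omega) E)
    exact_mod_cast h2
  have hmon := Real.rpow_le_rpow hlog0 hlog (z := (E : ℝ)⁻¹) (by positivity)
  rw [Real.mul_rpow hC.le (by positivity), Real.pow_rpow_inv_natCast (by positivity) (by omega)] at hmon
  rw [inv_mul_le_iff₀ (by positivity)]
  calc _ ≤ _ := hmon
    _ = _ := by ring
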